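/- Let q ∈ ℕ∪{0}, d, d*, K ∈ ℕ, β ∈ (0,∞), r ∈ (1/2,∞), Λ ∈ [1,∞). Assume d*·q ≤ K·q and d* ≤ d. Set e := β·(min{1,β})^q. Then there exists a constant c10 ∈ (0,∞) depending only on (d*,β,q,r) such that for every n ∈ ℕ: inf_{f̂_n} sup{E_{P^⊗n}[E_P(f̂_n)] : P ∈ H^{d,β,r,Λ}_{q,K,d*}} ≥ c10·(1/n)^{e/(d* + 2e)}, where the infimum is over all estimators based on the i.i.d. sample of size n. -/

import Mathlib

open MeasureTheory ENNReal Set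

noncomputable section

namespace ZZS

/-! ## Basic geometry -/

/-- The closed unit cube `[0,1]^m`. -/
def cube (m : ℕ) : Set (Fin m → ℝ) := Set.univ.pi fun _ => Set.Icc (0 : ℝ) 1

/-- The open unit cube `(0,1)^m`. -/
def cubeo (m : ℕ) : Set (Fin m → ℝ) := Set.univ.pi fun _ => Set.Ioo (0 : ℝ) 1

/-- The label set `{-1, 1} ⊆ ℝ`. -/
def labels : Set ℝ := {-1, 1}

/-- Euclidean distance on `Fin m → ℝ`. -/
def e2 {m : ℕ} (x z : Fin m → ℝ) : ℝ := Real.sqrt (∑ i, (x i - z i) ^ 2)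

/-! ## Multi-index partial derivatives and Hölder balls -/

/-- Iterated partial derivative along a list of coordinate directions. -/
def pderivList {m : ℕ} : List (Fin m) → ((Fin m → ℝ) → ℝ) → (Fin m → ℝ) → ℝ
  | [], f => f
  | i :: l, f => pderivList l fun x => fderiv ℝ f x (Pi.single i 1)

/-- The canonical list of directions attached to a multi-index. -/
def idxList {m : ℕ} (u : Fin m → ℕ) : List (Fin m) :=
  (List.finRange m).flatMap fun i => List.replicate (u i) i

/-- The partial derivative `D^u f` for a multi-index `u`. -/
def Dm {m : ℕ} (u : Fin m → ℕ) (f : (Fin m → ℝ) → ℝ) : (Fin m → ℝ) → ℝ :=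
  pderivList (idxList u) f

/-- The order `‖u‖₁` of a multi-index `u`. -/
def mord {m : ℕ} (u : Fin m → ℕ) : ℕ := ∑ i, u i

/-- The Hölder-`β` norm of `f`, suprema taken over the set `S` (value in `ℝ≥0∞`). -/
def holderNormOn (m : ℕ) (β : ℝ) (S : Set (Fin m → ℝ)) (f : (Fin m → ℝ) → ℝ) : ℝ≥0∞ :=
  (⨆ (u : Fin m → ℕ) (_ : (mord u : ℝ) < β) (x ∈ S), ENNReal.ofReal |Dm u f x|) +
    ⨆ (u : Fin m → ℕ) (_ : (⌈β⌉ : ℝ) - 1 ≤ (mord u : ℝ) ∧ (mord u : ℝ) < β)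
      (x ∈ S) (z ∈ S) (_ : x ≠ z),
      ENNReal.ofReal |Dm u f x - Dm u f z| /
        ENNReal.ofReal (e2 x z) ^ (β + 1 - (⌈β⌉ : ℝ))

/-- `⌈β - 1⌉`, the number of derivatives required for Hölder-`β` smoothness. -/
def smoothOrder (β : ℝ) : ℕ := ⌈β - 1⌉₊

/-- The Hölder ball `B^β_r([0,1]^m)`:  `⌈β-1⌉`-times continuously differentiable functions on
the interior of the cube (with uniformly continuous derivatives, so that they extend
continuously), with Hölder-`β` norm at most `r`. -/
def HolderBall (m : ℕ) (β r : ℝ) : Set ((Fin m → ℝ) → ℝ) :=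
  {f | ContinuousOn f (cube m) ∧
    ContDiffOn ℝ (smoothOrder β : ℕ∞) f (cubeo m) ∧
    (∀ u : Fin m → ℕ, (mord u : ℝ) < β → UniformContinuousOn (Dm u f) (cubeo m)) ∧
    holderNormOn m β (cubeo m) f ≤ ENNReal.ofReal r}

/-! ## Compositional function classes -/

/-- `G^H_m(dstar, β, r)`: Hölder-`β` functions of `dstar` of the `m` coordinates. -/
def GH (m dstar : ℕ) (β r : ℝ) : Set ((Fin m → ℝ) → ℝ) :=
  {f | ∃ (e : Fin dstar → Fin m) (g : (Fin dstar → ℝ) → ℝ),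
    StrictMono e ∧ g ∈ HolderBall dstar β r ∧ ∀ x ∈ cube m, f x = g fun j => x (e j)}

/-- `G^M_m(dmax)`: maxima of at most `dmax` coordinates. -/
def GM (m dmax : ℕ) : Set ((Fin m → ℝ) → ℝ) :=
  {f | ∃ (I : Finset (Fin m)) (hI : I.Nonempty), I.card ≤ dmax ∧
    ∀ x ∈ cube m, f x = I.sup' hI fun i => x i}

/-- The compositional class `G^CHOM_d(q, K, dmax, dstar, β, r)`. -/
def GCHOM (K dmax dstar : ℕ) (β r : ℝ) : ℕ → (d : ℕ) → Set ((Fin d → ℝ) → ℝ)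
  | 0, d => {f | ∃ h ∈ GH d dstar β r ∪ GM d dmax, ∀ x ∈ cube d, f x = h x}
  | q + 1, d =>
    {f | ∃ (H : (Fin d → ℝ) → Fin K → ℝ) (g : (Fin K → ℝ) → ℝ),
      (∀ j, (fun x => H x j) ∈ GH d dstar β r ∪ GM d dmax) ∧
      (∀ x ∈ cube d, H x ∈ cube K) ∧
      g ∈ GCHOM K dmax dstar β r q K ∧ ∀ x ∈ cube d, f x = g (H x)}

/-- The compositional class `G^CH_d(q, K, dstar, β, r)` (no max-value components). -/
def GCH (K dstar : ℕ) (β r : ℝ) : ℕ → (d : ℕ) → Set ((Fin d → ℝ) → ℝ)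
  | 0, d => {f | ∃ h ∈ GH d dstar β r, ∀ x ∈ cube d, f x = h x}
  | q + 1, d =>
    {f | ∃ (H : (Fin d → ℝ) → Fin K → ℝ) (g : (Fin K → ℝ) → ℝ),
      (∀ j, (fun x => H x j) ∈ GH d dstar β r) ∧
      (∀ x ∈ cube d, H x ∈ cube K) ∧
      g ∈ GCH K dstar β r q K ∧ ∀ x ∈ cube d, f x = g (H x)}

/-! ## Losses, risks, and data distributions -/

/-- The sign function (`sgn 0 = 1`). -/
def sgn (t : ℝ) : ℝ := if 0 ≤ t then 1 else -1

/-- The hinge loss. -/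
def hinge (t : ℝ) : ℝ := max 0 (1 - t)

/-- The truncation operator `T_F`. -/
def trunc (F t : ℝ) : ℝ := min F (max (-F) t)

/-- The joint distribution `P_{η,Q}` on `[0,1]^d × {-1,1}` with input marginal `Q` and
conditional class probability function `η`. -/
def jointMeasure {d : ℕ} (η : (Fin d → ℝ) → ℝ) (Q : Measure (Fin d → ℝ)) :
    Measure ((Fin d → ℝ) × ℝ) :=
  Q.bind fun x =>
    ENNReal.ofReal (η x) • Measure.dirac (x, (1 : ℝ)) +
      ENNReal.ofReal (1 - η x) • Measure.dirac (x, (-1 : ℝ))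

/-- The 0-1 risk (misclassification error). -/
def risk01 {d : ℕ} (P : Measure ((Fin d → ℝ) × ℝ)) (f : (Fin d → ℝ) → ℝ) : ℝ :=
  (P {p | sgn (f p.1) ≠ p.2}).toReal

/-- The infimum of the 0-1 risk over all measurable functions. -/
def bayes01 {d : ℕ} (P : Measure ((Fin d → ℝ) × ℝ)) : ℝ :=
  ⨅ g : {g : (Fin d → ℝ) → ℝ // Measurable g}, risk01 P g.1

/-- The excess 0-1 risk. -/
def excess01 {d : ℕ} (P : Measure ((Fin d → ℝ) × ℝ)) (f : (Fin d → ℝ) → ℝ) : ℝ :=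
  risk01 P f - bayes01 P

/-- The `φ`-risk. -/
def riskPhi {d : ℕ} (φ : ℝ → ℝ) (P : Measure ((Fin d → ℝ) × ℝ)) (f : (Fin d → ℝ) → ℝ) : ℝ :=
  ∫ p, φ (p.2 * f p.1) ∂P

/-- The infimum of the `φ`-risk over all measurable functions. -/
def bayesPhi {d : ℕ} (φ : ℝ → ℝ) (P : Measure ((Fin d → ℝ) × ℝ)) : ℝ :=
  ⨅ g : {g : (Fin d → ℝ) → ℝ // Measurable g}, riskPhi φ P g.1

/-- The excess `φ`-risk. -/
def excessPhi {d : ℕ} (φ : ℝ → ℝ) (P : Measure ((Fin d → ℝ) × ℝ)) (f : (Fin d → ℝ) → ℝ) : ℝ :=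
  riskPhi φ P f - bayesPhi φ P

/-- A Borel probability measure on `[0,1]^d × {-1,1}`, presented by its input marginal `Q`
(a Borel probability measure concentrated on the cube) and its conditional class
probability function `η` (measurable, `[0,1]`-valued);  the measure itself is
`jointMeasure η Q`. -/
structure DataDist (d : ℕ) where
  η : (Fin d → ℝ) → ℝ
  Q : Measure (Fin d → ℝ)
  η_meas : Measurable η
  η_mem : ∀ x, η x ∈ Set.Icc (0 : ℝ) 1
  Q_prob : IsProbabilityMeasure Q
  Q_cube : Q (cube d) = 1

/-- The measure on `[0,1]^d × {-1,1}` associated with a `DataDist`. -/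
def DataDist.P {d : ℕ} (D : DataDist d) : Measure ((Fin d → ℝ) × ℝ) := jointMeasure D.η D.Q

/-- `x ^ s` for `s ∈ [0,∞]`, with the conventions `x ^ ∞ = 0` for `x < 1` and `1 ^ ∞ = 1`. -/
def rpowE (x : ℝ≥0∞) (s : ℝ≥0∞) : ℝ≥0∞ :=
  if s = ∞ then (if x < 1 then 0 else if x = 1 then 1 else ∞) else x ^ s.toReal

/-- The Tsybakov noise class `T^{d,s}_{α,τ}` (noise exponent `s ∈ [0,∞]`,
threshold `τ ∈ (0,∞]`). -/
def Tsybakov (d : ℕ) (s : ℝ≥0∞) (α : ℝ) (τ : ℝ≥0∞) : Set (DataDist d) :=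
  {P | ∀ t : ℝ, 0 < t → ENNReal.ofReal t ≤ τ →
    P.Q ({x | |2 * P.η x - 1| ≤ t} ∩ cube d) ≤ ENNReal.ofReal α * rpowE (ENNReal.ofReal t) s}

/-- The class `H^{d,β,r}_{q,K,dstar,dmax}`: distributions whose conditional class probability
agrees a.s. with a member of `G^CHOM`. -/
def HCHOM (d q K dstar dmax : ℕ) (β r : ℝ) : Set (DataDist d) :=
  {P | ∃ f ∈ GCHOM K dmax dstar β r q d, ∀ᵐ x ∂P.Q, P.η x = f x}

/-- `M_{Λ,d}`: Borel probability measures on `[0,1]^d` with a `[0,Λ]`-valued density with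
respect to Lebesgue measure. -/
def MLam (d : ℕ) (Λ : ℝ) : Set (Measure (Fin d → ℝ)) :=
  {Q | ∃ g : (Fin d → ℝ) → ℝ, Measurable g ∧ (∀ x, g x ∈ Set.Icc 0 Λ) ∧
    Q = (volume.restrict (cube d)).withDensity fun x => ENNReal.ofReal (g x)}

/-- The class `H^{d,β,r,Λ}_{q,K,dstar}`: joint laws `P_{η,Q}` with `η ∈ G^CH` (valued in
`[0,1]`) and `Q ∈ M_{Λ,d}`. -/
def HCHL (d q K dstar : ℕ) (β r Λ : ℝ) : Set (DataDist d) :=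
  {P | (∃ f ∈ GCH K dstar β r q d, (∀ x ∈ cube d, f x ∈ Set.Icc (0 : ℝ) 1) ∧
      ∀ᵐ x ∂P.Q, P.η x = f x) ∧ P.Q ∈ MLam d Λ}

/-- The class `H^{d,β,r}_{q,K,dstar}`: joint laws `P_{η,Q}` with `η ∈ G^CH` (valued in
`[0,1]`) and `Q` an arbitrary Borel probability measure on the cube. -/
def HCH (d q K dstar : ℕ) (β r : ℝ) : Set (DataDist d) :=
  {P | ∃ f ∈ GCH K dstar β r q d, (∀ x ∈ cube d, f x ∈ Set.Icc (0 : ℝ) 1) ∧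
    ∀ᵐ x ∂P.Q, P.η x = f x}

/-! ## Samples and estimators -/

/-- The law of an i.i.d. sample of size `n` from `μ`. -/
def iid {α : Type*} [MeasurableSpace α] (μ : Measure α) : (n : ℕ) → Measure (Fin n → α)
  | 0 => Measure.dirac fun i => i.elim0
  | n + 1 => (iid μ n).bind fun p => μ.map fun a => Fin.snoc p a

/-- An estimator: a rule assigning to each sample of size `n` a function `[0,1]^d → ℝ`. -/
def Estimator (d n : ℕ) := (Fin n → (Fin d → ℝ) × ℝ) → (Fin d → ℝ) → ℝ

/-- (Joint) measurability of an estimator. -/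
def Estimator.Meas {d n : ℕ} (A : Estimator d n) : Prop :=
  Measurable fun p : (Fin n → (Fin d → ℝ) × ℝ) × (Fin d → ℝ) => A p.1 p.2

/-- The expected excess 0-1 risk `E_{P^{⊗n}}[E_P(f̂_n)]` of an estimator. -/
def expectedExcess01 {d : ℕ} (P : Measure ((Fin d → ℝ) × ℝ)) {n : ℕ} (A : Estimator d n) : ℝ :=
  ∫ ω, excess01 P (A ω) ∂iid P n

/-- The covering number `N(F, γ)` (uniform norm over `Ω`), valued in `ℝ≥0∞`. -/
def coveringNumber {X : Type*} (Ω : Set X) (F : Set (X → ℝ)) (γ : ℝ) : ℝ≥0∞ :=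
  ⨅ (A : Finset (X → ℝ))
    (_ : ↑A ⊆ F ∧ ∀ f ∈ F, ∃ g ∈ A, ∀ x ∈ Ω, |f x - g x| ≤ γ),
    (A.card : ℝ≥0∞)

/-- `f` is an empirical `φ`-risk minimizer over `F` for the sample `ω`. -/
def IsERM {d n : ℕ} (φ : ℝ → ℝ) (F : Set ((Fin d → ℝ) → ℝ))
    (ω : Fin n → (Fin d → ℝ) × ℝ) (f : (Fin d → ℝ) → ℝ) : Prop :=
  f ∈ F ∧ ∀ g ∈ F,
    (n : ℝ)⁻¹ * ∑ i, φ ((ω i).2 * f ((ω i).1)) ≤ (n : ℝ)⁻¹ * ∑ i, φ ((ω i).2 * g ((ω i).1))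

/-! ## ReLU neural networks -/

/-- A feedforward ReLU network with input dimension `d`. -/
structure ReLUNet (d : ℕ) where
  L : ℕ
  width : ℕ → ℕ
  W : (i : ℕ) → Fin (width (i + 1)) → Fin (width i) → ℝ
  v : (i : ℕ) → Fin (width i) → ℝ
  h0 : width 0 = d
  hL : width (L + 1) = 1

/-- The `i`-th intermediate layer output `W_i σ_{v_i} ⋯ W_1 σ_{v_1} W_0 x`. -/
def ReLUNet.layer {d : ℕ} (net : ReLUNet d) (x : Fin (net.width 0) → ℝ) :
    (i : ℕ) → Fin (net.width (i + 1)) → ℝ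
  | 0 => fun j => ∑ k, net.W 0 j k * x k
  | i + 1 => fun j => ∑ k, net.W (i + 1) j k * max 0 (net.layer x i k - net.v (i + 1) k)

/-- The real-valued function computed by a ReLU network. -/
def ReLUNet.eval {d : ℕ} (net : ReLUNet d) (x : Fin d → ℝ) : ℝ :=
  net.layer (fun j => x (Fin.cast net.h0 j)) net.L (Fin.cast net.hL.symm 0)

/-- The class `F^NN_d(G, N, S, B, Fb)` of ReLU networks with depth `≤ G`, widths `≤ N`,
at most `S` nonzero parameters, parameter magnitudes `≤ B`, and uniform norm on the cube
`≤ Fb`. -/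
def FNN (d : ℕ) (G N : ℝ) (S : ℝ≥0∞) (B : ℝ) (Fb : ℝ≥0∞) : Set ((Fin d → ℝ) → ℝ) :=
  {f | ∃ net : ReLUNet d,
    (∀ x, f x = net.eval x) ∧
    (net.L : ℝ) ≤ G ∧
    (∀ i ≤ net.L + 1, (net.width i : ℝ) ≤ N) ∧
    ((∑ i ∈ Finset.range (net.L + 1),
        (Nat.card {p : Fin (net.width (i + 1)) × Fin (net.width i) // net.W i p.1 p.2 ≠ 0}
          : ℝ≥0∞)) +
      ∑ i ∈ Finset.range net.L,
        (Nat.card {j : Fin (net.width (i + 1)) // net.v (i + 1) j ≠ 0} : ℝ≥0∞)) ≤ S ∧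
    (∀ i ≤ net.L, ∀ j k, |net.W i j k| ≤ B) ∧
    (∀ i, 1 ≤ i → i ≤ net.L → ∀ j, |net.v i j| ≤ B) ∧
    ∀ x ∈ cube d, ENNReal.ofReal |f x| ≤ Fb}

/-! ## Kullback–Leibler divergence -/

open Classical in
/-- The Kullback–Leibler divergence. -/
def KL {X : Type*} [MeasurableSpace X] (P Q : Measure X) : ℝ≥0∞ :=
  if P ≪ Q ∧ Integrable (fun x => Real.log (P.rnDeriv Q x).toReal) P then
    ENNReal.ofReal (∫ x, Real.log (P.rnDeriv Q x).toReal ∂P)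
  else ∞

/-- The exponent `e / (dstar/(s+1) + (1 + 1/(s+1))·e)` of the minimax rate, for noise
exponent `s ∈ [0,∞]` (equal to `1` when `s = ∞`). -/
def rateExp (dstar : ℕ) (e : ℝ) (s : ℝ≥0∞) : ℝ :=
  if s = ∞ then 1
  else e / ((dstar : ℝ) / (s.toReal + 1) + (1 + 1 / (s.toReal + 1)) * e)

/-!
Assouad's lemma on a hypercube of regression functions. On the grid of `N ^ dstar` subcubes of
`[0,1] ^ dstar`, sum any subset of the smooth bumps of height `b * N ^ (-β)` centred at the grid
cells, apply `q` times the power map `t ↦ c * t ^ min 1 β`, and shift the result so that it is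
centred at `1 / 2`. The functions obtained stay in the compositional Hölder class, and each bump
moves the conditional class probability by an amount of the order `τ = N ^ (-e)` on its own cell,
where `e = β * (min 1 β) ^ q`. Flipping one bump changes the squared Hellinger distance of the
joint laws by at most a multiple of `τ ^ 2 * N ^ (-dstar)`, so the laws of `n` samples cannot be
told apart as long as `n ≲ N ^ (dstar + 2 * e)`; any estimator then misclassifies a fixed
proportion of the bumps of some vertex, at an excess risk of the order `τ`.
-/

/-! ## Partial derivatives and Hölder balls -/

section HolderBall

variable {m : ℕ} {f : (Fin m → ℝ) → ℝ} {β r : ℝ}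

theorem pderivList_append (l l' : List (Fin m)) (f : (Fin m → ℝ) → ℝ) :
    pderivList (l ++ l') f = pderivList l' (pderivList l f) := by
  induction l generalizing f with
  | nil => rfl
  | cons i _ ih => exact ih _

theorem contDiff_partial (hf : ContDiff ℝ (⊤ : ℕ∞) f) (i : Fin m) :
    ContDiff ℝ (⊤ : ℕ∞) fun x => fderiv ℝ f x (Pi.single i 1) :=
  (hf.fderiv_right (m := (⊤ : ℕ∞)) (by simp)).clm_apply contDiff_const

theorem contDiff_pderivList (l : List (Fin m)) (hf : ContDiff ℝ (⊤ : ℕ∞) f) :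
    ContDiff ℝ (⊤ : ℕ∞) (pderivList l f) := by
  induction l generalizing f with
  | nil => exact hf
  | cons i _ ih => exact ih (contDiff_partial hf i)

theorem pderivList_zero (l : List (Fin m)) : pderivList l (fun _ => (0 : ℝ)) = fun _ => 0 := by
  induction l with
  | nil => rfl
  | cons i l ih => simpa [pderivList] using ih

theorem pderivList_const_add (a : ℝ) (l : List (Fin m)) (f : (Fin m → ℝ) → ℝ) :
    pderivList l (fun x => a + f x) = fun x => (if l = [] then a else 0) + pderivList l f x := by
  cases l with
  | nil => simp [pderivList]
  | cons i l => simp [pderivList, fderiv_const_add]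

theorem length_idxList (u : Fin m → ℕ) : (idxList u).length = mord u := by
  simp [idxList, mord, List.length_flatMap, Fin.sum_univ_def]

theorem Dm_eq_self {u : Fin m → ℕ} (hu : mord u = 0) (f : (Fin m → ℝ) → ℝ) : Dm u f = f := by
  have : idxList u = [] := List.length_eq_zero_iff.1 (by rw [length_idxList, hu])
  rw [Dm, this, pderivList]

theorem norm_sub_le_e2 (x z : Fin m → ℝ) : ‖x - z‖ ≤ e2 x z := by
  refine (pi_norm_le_iff_of_nonneg (Real.sqrt_nonneg _)).2 fun i => ?_
  rw [Real.norm_eq_abs, Pi.sub_apply]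
  exact Real.abs_le_sqrt
    (Finset.single_le_sum (f := fun i => (x i - z i) ^ 2) (fun i _ => sq_nonneg _)
      (Finset.mem_univ i))

theorem e2_pos {x z : Fin m → ℝ} (h : x ≠ z) : 0 < e2 x z :=
  (norm_pos_iff.2 (sub_ne_zero.2 h)).trans_le (norm_sub_le_e2 x z)

theorem cubeo_subset_cube : cubeo m ⊆ cube m := Set.pi_mono fun _ _ => Ioo_subset_Icc_self

theorem convex_cubeo : Convex ℝ (cubeo m) := convex_pi fun _ _ => convex_Ioo 0 1

theorem ceil_sub_one_le_iff_of_lt {k : ℕ} (hk : (k : ℝ) < β) :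
    (⌈β⌉ : ℝ) - 1 ≤ k ↔ (k : ℝ) = ⌈β⌉ - 1 := by
  refine ⟨fun h => le_antisymm ?_ h, fun h => h.ge⟩
  have : (k : ℤ) < ⌈β⌉ := Int.lt_ceil.2 (by exact_mod_cast hk)
  exact_mod_cast Int.le_sub_one_of_lt this

theorem holderNormOn_le {S : Set (Fin m → ℝ)} {A H : ℝ} (hA : 0 ≤ A) (hH : 0 ≤ H)
    (hsup : ∀ u : Fin m → ℕ, (mord u : ℝ) < β → ∀ x ∈ S, |Dm u f x| ≤ A)
    (hinc : ∀ u : Fin m → ℕ, (mord u : ℝ) < β → (mord u : ℝ) = ⌈β⌉ - 1 → ∀ x ∈ S, ∀ z ∈ S,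
      |Dm u f x - Dm u f z| ≤ H * e2 x z ^ (β + 1 - (⌈β⌉ : ℝ))) :
    holderNormOn m β S f ≤ ENNReal.ofReal (A + H) := by
  rw [ENNReal.ofReal_add hA hH]
  refine add_le_add ?_ ?_
  · exact iSup_le fun u => iSup_le fun hu => iSup₂_le fun x hx =>
      ENNReal.ofReal_le_ofReal (hsup u hu x hx)
  · refine iSup_le fun u => iSup_le fun hu => iSup₂_le fun x hx => iSup₂_le fun z hz =>
      iSup_le fun hxz => ?_
    have hpos := e2_pos hxz
    rw [ENNReal.ofReal_rpow_of_pos hpos, ← ENNReal.ofReal_div_of_pos (by positivity)]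
    refine ENNReal.ofReal_le_ofReal ((div_le_iff₀ (by positivity)).2 ?_)
    exact hinc u hu.2 ((ceil_sub_one_le_iff_of_lt hu.2).1 hu.1) x hx z hz

theorem HolderBall_mono {r' : ℝ} (h : r ≤ r') : HolderBall m β r ⊆ HolderBall m β r' :=
  fun _ hf => ⟨hf.1, hf.2.1, hf.2.2.1, hf.2.2.2.trans (ENNReal.ofReal_le_ofReal h)⟩

theorem Dm_const_add (a : ℝ) (u : Fin m → ℕ) (f : (Fin m → ℝ) → ℝ) :
    Dm u (fun x => a + f x) = fun x => (if idxList u = [] then a else 0) + Dm u f x :=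
  pderivList_const_add a _ f

theorem holderNormOn_const_add_le (a : ℝ) (S : Set (Fin m → ℝ)) :
    holderNormOn m β S (fun x => a + f x) ≤ ENNReal.ofReal |a| + holderNormOn m β S f := by
  simp only [holderNormOn, Dm_const_add, add_sub_add_left_eq_sub]
  rw [← add_assoc]
  refine add_le_add_left (iSup_le fun u => iSup_le fun hu => iSup₂_le fun x hx => ?_) _
  have hconst : |if idxList u = [] then a else 0| ≤ |a| := by split_ifs <;> simp
  calc ENNReal.ofReal |(if idxList u = [] then a else 0) + Dm u f x|
      ≤ ENNReal.ofReal (|a| + |Dm u f x|) :=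
        ENNReal.ofReal_le_ofReal ((abs_add_le _ _).trans (by gcongr))
    _ = ENNReal.ofReal |a| + ENNReal.ofReal |Dm u f x| :=
        ENNReal.ofReal_add (abs_nonneg _) (abs_nonneg _)
    _ ≤ _ := by
        gcongr
        exact le_iSup_of_le u (le_iSup_of_le hu (le_iSup₂_of_le x hx le_rfl))

theorem const_add_mem_HolderBall (a : ℝ) (hr : 0 ≤ r) (hf : f ∈ HolderBall m β r) :
    (fun x => a + f x) ∈ HolderBall m β (|a| + r) := by
  obtain ⟨hcont, hdiff, hunif, hnorm⟩ := hf
  refine ⟨continuousOn_const.add hcont, contDiffOn_const.add hdiff, fun u hu => ?_, ?_⟩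
  · rw [Dm_const_add]
    exact (uniformContinuous_const.add uniformContinuous_id).comp_uniformContinuousOn (hunif u hu)
  · rw [ENNReal.ofReal_add (abs_nonneg a) hr]
    exact (holderNormOn_const_add_le a _).trans (by gcongr)

end HolderBall

section SmoothHolderBall

variable {m : ℕ} {f : (Fin m → ℝ) → ℝ}

theorem norm_le_card_mul_of_abs_apply_single_le {L : (Fin m → ℝ) →L[ℝ] ℝ} {C : ℝ}
    (hC : ∀ i, |L (Pi.single i 1)| ≤ C) : ‖L‖ ≤ m * C := by
  rcases Nat.eq_zero_or_pos m with rfl | hm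
  · simp [Subsingleton.elim L 0]
  have hC0 : 0 ≤ C := (abs_nonneg _).trans (hC ⟨0, hm⟩)
  refine L.opNorm_le_bound (by positivity) fun v => ?_
  calc ‖L v‖ = ‖∑ i, v i * L (Pi.single i 1)‖ := by
        conv_lhs => rw [pi_eq_sum_univ' v]
        simp only [map_sum, map_smul, smul_eq_mul]
    _ ≤ ∑ i, ‖v i * L (Pi.single i 1)‖ := norm_sum_le _ _
    _ ≤ ∑ _i : Fin m, ‖v‖ * C := by
        refine Finset.sum_le_sum fun i _ => ?_
        rw [norm_mul]
        exact mul_le_mul (norm_le_pi_norm v i) (hC i) (norm_nonneg _) (norm_nonneg _)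
    _ = m * C * ‖v‖ := by simp; ring

theorem abs_sub_le_of_abs_partial_le {S : Set (Fin m → ℝ)} (hS : Convex ℝ S)
    (hf : Differentiable ℝ f) {C : ℝ} (hC : ∀ i, ∀ x ∈ S, |fderiv ℝ f x (Pi.single i 1)| ≤ C)
    {x z : Fin m → ℝ} (hx : x ∈ S) (hz : z ∈ S) : |f x - f z| ≤ m * C * ‖x - z‖ :=
  hS.norm_image_sub_le_of_norm_fderiv_le (𝕜 := ℝ) (fun x _ => hf x)
    (fun y hy => norm_le_card_mul_of_abs_apply_single_le fun i => hC i y hy) hz hx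

theorem min_one_le_rpow {t s : ℝ} (ht : 0 ≤ t) (hs0 : 0 ≤ s) (hs1 : s ≤ 1) : min 1 t ≤ t ^ s := by
  rcases le_total 1 t with h | h
  · exact (min_le_left _ _).trans (Real.one_le_rpow h hs0)
  · refine (min_le_right _ _).trans ?_
    simpa using Real.rpow_le_rpow_of_exponent_ge' ht h hs0 hs1

theorem le_mul_rpow_of_le_of_le {D C M s t : ℝ} (hC : 0 ≤ C) (hM : 0 < M) (ht : 0 ≤ t)
    (hs0 : 0 ≤ s) (hs1 : s ≤ 1) (hsup : D ≤ C * M ^ (-s)) (hlip : D ≤ C * M ^ (1 - s) * t) :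
    D ≤ C * t ^ s := by
  have hlip' : D ≤ C * M ^ (-s) * (M * t) := by
    rw [sub_eq_neg_add, Real.rpow_add hM, Real.rpow_one] at hlip
    linarith
  calc D ≤ C * M ^ (-s) * min 1 (M * t) := by
        rcases min_choice 1 (M * t) with h | h <;> rw [h]
        · simpa using hsup
        · exact hlip'
    _ ≤ C * M ^ (-s) * (M * t) ^ s := by
        gcongr
        exact min_one_le_rpow (by positivity) hs0 hs1
    _ = C * (M ^ (-s) * M ^ s) * t ^ s := by rw [Real.mul_rpow hM.le ht]; ring
    _ = C * t ^ s := by rw [← Real.rpow_add hM]; simp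

variable {β B M : ℝ}

theorem abs_Dm_sub_le_of_abs_pderivList_le (hf : ContDiff ℝ (⊤ : ℕ∞) f)
    (hbd : ∀ l : List (Fin m), l.length ≤ ⌈β⌉₊ → ∀ x ∈ cubeo m,
      |pderivList l f x| ≤ B * M ^ ((l.length : ℝ) - β))
    {u : Fin m → ℕ} (hu : (mord u : ℝ) < β) {x z : Fin m → ℝ} (hx : x ∈ cubeo m)
    (hz : z ∈ cubeo m) :
    |Dm u f x - Dm u f z| ≤ m * (B * M ^ ((mord u : ℝ) + 1 - β)) * ‖x - z‖ := by
  refine abs_sub_le_of_abs_partial_le convex_cubeo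
    ((contDiff_pderivList _ hf).differentiable (by simp)) (fun i y hy => ?_) hx hz
  have hlen : (idxList u ++ [i]).length ≤ ⌈β⌉₊ := by
    simpa [length_idxList] using Nat.lt_ceil.2 hu
  simpa [pderivList_append, pderivList, length_idxList] using hbd _ hlen y hy

theorem abs_Dm_sub_le_rpow_of_abs_pderivList_le (hB : 0 ≤ B) (hM : 0 < M)
    (hf : ContDiff ℝ (⊤ : ℕ∞) f)
    (hbd : ∀ l : List (Fin m), l.length ≤ ⌈β⌉₊ → ∀ x ∈ cubeo m,
      |pderivList l f x| ≤ B * M ^ ((l.length : ℝ) - β))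
    {u : Fin m → ℕ} (hu : (mord u : ℝ) < β) (hord : (mord u : ℝ) = ⌈β⌉ - 1) {x z : Fin m → ℝ}
    (hx : x ∈ cubeo m) (hz : z ∈ cubeo m) :
    |Dm u f x - Dm u f z| ≤ (m + 2) * B * e2 x z ^ (β + 1 - (⌈β⌉ : ℝ)) := by
  have hexp : (mord u : ℝ) - β = -(β + 1 - ⌈β⌉) := by rw [hord]; ring
  have hsup : ∀ y ∈ cubeo m, |Dm u f y| ≤ B * M ^ (-(β + 1 - (⌈β⌉ : ℝ))) := fun y hy => by
    have hlen : (idxList u).length ≤ ⌈β⌉₊ := by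
      rw [length_idxList]
      exact (Nat.lt_ceil.2 hu).le
    simpa [Dm, length_idxList, hexp] using hbd _ hlen y hy
  refine le_mul_rpow_of_le_of_le (by positivity) hM (Real.sqrt_nonneg _) (by linarith)
    (by linarith [Int.le_ceil β]) ?_ ?_
  · calc |Dm u f x - Dm u f z| ≤ |Dm u f x| + |Dm u f z| := abs_sub _ _
      _ ≤ 2 * B * M ^ (-(β + 1 - (⌈β⌉ : ℝ))) := by linarith [hsup x hx, hsup z hz]
      _ ≤ (m + 2) * B * M ^ (-(β + 1 - (⌈β⌉ : ℝ))) := by gcongr; simp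
  · rw [show (1 : ℝ) - (β + 1 - ⌈β⌉) = mord u + 1 - β by rw [hord]; ring]
    calc |Dm u f x - Dm u f z| ≤ m * (B * M ^ ((mord u : ℝ) + 1 - β)) * ‖x - z‖ :=
          abs_Dm_sub_le_of_abs_pderivList_le hf hbd hu hx hz
      _ = m * B * M ^ ((mord u : ℝ) + 1 - β) * ‖x - z‖ := by ring
      _ ≤ (m + 2) * B * M ^ ((mord u : ℝ) + 1 - β) * e2 x z := by
          gcongr
          · simp
          · exact norm_sub_le_e2 x z

theorem mem_HolderBall_of_abs_pderivList_le (hB : 0 ≤ B) (hM : 1 ≤ M)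
    (hf : ContDiff ℝ (⊤ : ℕ∞) f)
    (hbd : ∀ l : List (Fin m), l.length ≤ ⌈β⌉₊ → ∀ x ∈ cubeo m,
      |pderivList l f x| ≤ B * M ^ ((l.length : ℝ) - β)) :
    f ∈ HolderBall m β ((m + 3) * B) := by
  have hM0 : 0 < M := one_pos.trans_le hM
  refine ⟨hf.continuous.continuousOn, (hf.of_le (by exact_mod_cast le_top)).contDiffOn,
    fun u hu => ?_, ?_⟩
  · refine LipschitzOnWith.uniformContinuousOn
      (K := (m * (B * M ^ ((mord u : ℝ) + 1 - β))).toNNReal)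
      (LipschitzOnWith.of_dist_le_mul fun x hx z hz => ?_)
    rw [Real.coe_toNNReal _ (by positivity), Real.dist_eq, dist_eq_norm]
    exact abs_Dm_sub_le_of_abs_pderivList_le hf hbd hu hx hz
  · rw [show ((m : ℝ) + 3) * B = B + (m + 2) * B by ring]
    refine holderNormOn_le hB (by positivity) (fun u hu x hx => ?_) fun u hu hord x hx z hz =>
      abs_Dm_sub_le_rpow_of_abs_pderivList_le hB hM0 hf hbd hu hord hx hz
    have hlen : (idxList u).length ≤ ⌈β⌉₊ := by
      rw [length_idxList]
      exact (Nat.lt_ceil.2 hu).le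
    refine (hbd _ hlen x hx).trans (mul_le_of_le_one_right hB ?_)
    exact Real.rpow_le_one_of_one_le_of_nonpos hM (by rw [length_idxList]; linarith)

end SmoothHolderBall

section PowerMapHolderBall

variable {m : ℕ} {γ : NNReal}

theorem abs_rpow_sub_rpow_le {a b s : ℝ} (ha : 0 ≤ a) (hb : 0 ≤ b) (hs0 : 0 ≤ s) (hs1 : s ≤ 1) :
    |a ^ s - b ^ s| ≤ |a - b| ^ s := by
  wlog h : b ≤ a generalizing a b with H
  · rw [abs_sub_comm, abs_sub_comm a]
    exact H hb ha (le_of_not_ge h)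
  have hsub : 0 ≤ a - b := sub_nonneg.2 h
  rw [abs_of_nonneg hsub, abs_of_nonneg (sub_nonneg.2 (Real.rpow_le_rpow hb h hs0)),
    sub_le_iff_le_add]
  simpa using Real.rpow_add_le_add_rpow hsub hb hs0 hs1

theorem mem_HolderBall_of_holderOnWith {f : (Fin m → ℝ) → ℝ} {A : ℝ} {C : NNReal} (hγ0 : 0 < γ)
    (hγ1 : γ ≤ 1) (hA : 0 ≤ A) (hsup : ∀ x ∈ cube m, |f x| ≤ A)
    (hf : HolderOnWith C γ f (cube m)) : f ∈ HolderBall m γ (A + C) := by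
  have hceil : ⌈(γ : ℝ)⌉ = 1 :=
    Int.ceil_eq_iff.2 ⟨by simpa using hγ0, by exact_mod_cast hγ1⟩
  have hord : ∀ u : Fin m → ℕ, (mord u : ℝ) < γ → mord u = 0 := fun u hu =>
    Nat.lt_one_iff.1 (by exact_mod_cast hu.trans_le (NNReal.coe_le_one.2 hγ1))
  have hunif := hf.uniformContinuousOn hγ0
  refine ⟨hunif.continuousOn, ?_, fun u hu => ?_, ?_⟩
  · have : smoothOrder γ = 0 := Nat.ceil_eq_zero.2 (by simpa using hγ1)
    rw [this]
    exact contDiffOn_zero.2 (hunif.continuousOn.mono cubeo_subset_cube)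
  · rw [Dm_eq_self (hord u hu)]
    exact hunif.mono cubeo_subset_cube
  · refine holderNormOn_le hA C.coe_nonneg (fun u hu x hx => ?_) fun u hu _ x hx z hz => ?_ <;>
      rw [Dm_eq_self (hord u hu)]
    · exact hsup x (cubeo_subset_cube hx)
    · rw [hceil, Int.cast_one, add_sub_cancel_right]
      calc |f x - f z| ≤ C * dist x z ^ (γ : ℝ) :=
            hf.dist_le (cubeo_subset_cube hx) (cubeo_subset_cube hz)
        _ ≤ C * e2 x z ^ (γ : ℝ) := by
            rw [dist_eq_norm]
            gcongr
            exact norm_sub_le_e2 x z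

/-- The power map `t ↦ c * t ^ γ`, whose iterates are the outer layers of the compositions
that make up the hypercube. -/
def powMap (c γ t : ℝ) : ℝ := c * t ^ γ

theorem holderOnWith_powMap_apply (c : NNReal) (hγ1 : γ ≤ 1) (i : Fin m) :
    HolderOnWith c γ (fun x : Fin m → ℝ => powMap c γ (x i)) (cube m) := by
  intro x hx z hz
  rw [edist_dist, edist_dist, ENNReal.ofReal_rpow_of_nonneg dist_nonneg γ.coe_nonneg,
    ← ENNReal.ofReal_coe_nnreal, ← ENNReal.ofReal_mul c.coe_nonneg]
  refine ENNReal.ofReal_le_ofReal ?_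
  calc dist (powMap c γ (x i)) (powMap c γ (z i)) = c * |x i ^ (γ : ℝ) - z i ^ (γ : ℝ)| := by
        rw [Real.dist_eq, powMap, powMap, ← mul_sub, abs_mul, NNReal.abs_eq]
    _ ≤ c * |x i - z i| ^ (γ : ℝ) := by
        gcongr
        exact abs_rpow_sub_rpow_le (hx i trivial).1 (hz i trivial).1 γ.coe_nonneg
          (by exact_mod_cast hγ1)
    _ ≤ c * dist x z ^ (γ : ℝ) := by
        gcongr
        exact dist_le_pi_dist x z i

theorem fderiv_const_mul_apply_single (c : ℝ) (i j : Fin m) (x : Fin m → ℝ) :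
    fderiv ℝ (fun x : Fin m → ℝ => c * x i) x (Pi.single j 1) =
      c * (Pi.single j 1 : Fin m → ℝ) i := by
  have h : HasFDerivAt (fun x : Fin m → ℝ => c * x i)
      (c • ContinuousLinearMap.proj (R := ℝ) (φ := fun _ => ℝ) i) x :=
    (hasFDerivAt_apply i x).const_mul c
  simp [h.fderiv]

theorem abs_pderivList_const_mul_apply_le {c : ℝ} (hc : 0 ≤ c) (i : Fin m) (l : List (Fin m))
    {x : Fin m → ℝ} (hx : x ∈ cubeo m) : |pderivList l (fun x => c * x i) x| ≤ c := by
  have hxi := hx i trivial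
  match l with
  | [] =>
    rw [pderivList, abs_of_nonneg (mul_nonneg hc hxi.1.le)]
    exact mul_le_of_le_one_right hc hxi.2.le
  | [j] =>
    simp only [pderivList, fderiv_const_mul_apply_single, Pi.single_apply]
    split_ifs <;> simp [abs_of_nonneg, hc]
  | j :: k :: l => simpa [pderivList, fderiv_const_mul_apply_single, pderivList_zero] using hc

theorem powMap_apply_mem_HolderBall {β c : ℝ} (hβ : 0 < β) (hc : 0 ≤ c) (i : Fin m) :
    (fun x : Fin m → ℝ => powMap c (min 1 β) (x i)) ∈ HolderBall m β ((m + 3) * c) := by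
  rcases le_total 1 β with h | h
  · simp only [powMap, min_eq_left h, Real.rpow_one]
    exact mem_HolderBall_of_abs_pderivList_le (M := 1) hc le_rfl (by fun_prop) fun l _ x hx => by
      simpa using abs_pderivList_const_mul_apply_le hc i l hx
  · rw [min_eq_right h]
    lift β to NNReal using hβ.le
    lift c to NNReal using hc
    have hsup : ∀ x ∈ cube m, |powMap c β (x i)| ≤ c := fun x hx => by
      have hxi := hx i trivial
      rw [powMap, abs_of_nonneg (mul_nonneg c.coe_nonneg (Real.rpow_nonneg hxi.1 _))]
      exact mul_le_of_le_one_right c.coe_nonneg (Real.rpow_le_one hxi.1 hxi.2 β.coe_nonneg)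
    have hhol := holderOnWith_powMap_apply c (by exact_mod_cast h) i
    refine HolderBall_mono ?_
      (mem_HolderBall_of_holderOnWith (by exact_mod_cast hβ) (by exact_mod_cast h)
        c.coe_nonneg hsup hhol)
    nlinarith [c.coe_nonneg, (m.cast_nonneg : (0 : ℝ) ≤ m)]

end PowerMapHolderBall

/-! ## Sums of bumps centred on a grid -/

section BumpSum

variable {m N : ℕ}

/-- The centre of the cell with index `k` in the partition of the unit cube into `N ^ m` cells
of side `1 / N`. -/
def gridCenter (k : Fin m → Fin N) : Fin m → ℝ := fun j => ((k j : ℕ) + 1 / 2) / N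

/-- The sup-norm ball at the centre of a grid cell, with radius `ρ` relative to the side of the
cell; it fills the cell when `ρ = 1 / 2`. -/
def gridBall (ρ : ℝ) (k : Fin m → Fin N) : Set (Fin m → ℝ) :=
  Metric.closedBall (gridCenter k) (ρ / N)

/-- The weighted sum of the rescaled copies of `φ` centred in the grid cells. -/
def bumpSum (φ : (Fin m → ℝ) → ℝ) (s : (Fin m → Fin N) → ℝ) (x : Fin m → ℝ) : ℝ :=
  ∑ k, s k * φ ((N : ℝ) • (x - gridCenter k))

theorem smul_sub_gridCenter_mem_closedBall_iff (hN : 0 < N) {ρ : ℝ} {k : Fin m → Fin N}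
    {x : Fin m → ℝ} :
    (N : ℝ) • (x - gridCenter k) ∈ Metric.closedBall 0 ρ ↔ x ∈ gridBall ρ k := by
  have hN' : (0 : ℝ) < N := by exact_mod_cast hN
  rw [gridBall, mem_closedBall_zero_iff, norm_smul, Real.norm_natCast, mem_closedBall_iff_norm,
    le_div_iff₀' hN']

theorem one_div_le_dist_gridCenter {k k' : Fin m → Fin N} (h : k ≠ k') :
    1 / (N : ℝ) ≤ dist (gridCenter k) (gridCenter k') := by
  obtain ⟨j, hj⟩ := Function.ne_iff.1 h
  have hint : (1 : ℝ) ≤ |((k j : ℕ) : ℝ) - (k' j : ℕ)| := by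
    have : (1 : ℤ) ≤ |((k j : ℕ) : ℤ) - (k' j : ℕ)| :=
      Int.one_le_abs (sub_ne_zero.2 fun h => hj (Fin.ext (by exact_mod_cast h)))
    exact_mod_cast this
  calc 1 / (N : ℝ) ≤ |((k j : ℕ) : ℝ) - (k' j : ℕ)| / N := by gcongr
    _ = dist (gridCenter k j) (gridCenter k' j) := by
        rw [Real.dist_eq, gridCenter, gridCenter, ← sub_div, add_sub_add_right_eq_sub, abs_div,
          Nat.abs_cast]
    _ ≤ _ := dist_le_pi_dist _ _ j

theorem disjoint_gridBall (hN : 0 < N) {ρ : ℝ} (hρ : ρ < 1 / 2) {k k' : Fin m → Fin N}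
    (h : k ≠ k') : Disjoint (gridBall ρ k) (gridBall ρ k') := by
  refine Metric.closedBall_disjoint_closedBall (lt_of_lt_of_le ?_ (one_div_le_dist_gridCenter h))
  rw [← add_div]
  exact div_lt_div_of_pos_right (by linarith) (by exact_mod_cast hN)

theorem gridBall_subset_cube (hN : 0 < N) {ρ : ℝ} (hρ : ρ ≤ 1 / 2) (k : Fin m → Fin N) :
    gridBall ρ k ⊆ cube m := by
  have hN' : (0 : ℝ) < N := by exact_mod_cast hN
  intro x hx j _
  have hk : ((k j : ℕ) : ℝ) + 1 ≤ N := by exact_mod_cast (k j).isLt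
  have hdist := abs_le.1 ((dist_le_pi_dist x (gridCenter k) j).trans hx)
  have h1 : ρ / N ≤ gridCenter k j := div_le_div_of_nonneg_right
    (hρ.trans (by simp)) hN'.le
  have h2 : gridCenter k j + ρ / N ≤ 1 := by
    rw [gridCenter, ← add_div, div_le_one hN']
    linarith
  exact ⟨by linarith [hdist.1], by linarith [hdist.2]⟩

section Support

variable {φ : (Fin m → ℝ) → ℝ} {ρ : ℝ} {s : (Fin m → Fin N) → ℝ} {x : Fin m → ℝ}

theorem bumpSum_of_mem_gridBall (hN : 0 < N) (hρ : ρ < 1 / 2)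
    (hφ : ∀ y ∉ Metric.closedBall 0 ρ, φ y = 0) {k : Fin m → Fin N} (hx : x ∈ gridBall ρ k) :
    bumpSum φ s x = s k * φ ((N : ℝ) • (x - gridCenter k)) := by
  refine Finset.sum_eq_single k (fun k' _ hne => ?_) fun h => absurd (Finset.mem_univ k) h
  have hx' : x ∉ gridBall ρ k' := (disjoint_gridBall hN hρ hne.symm).notMem_of_mem_left hx
  rw [hφ _ (mt (smul_sub_gridCenter_mem_closedBall_iff hN).1 hx'), mul_zero]

theorem bumpSum_of_forall_notMem_gridBall (hN : 0 < N)
    (hφ : ∀ y ∉ Metric.closedBall 0 ρ, φ y = 0) (hx : ∀ k : Fin m → Fin N, x ∉ gridBall ρ k) :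
    bumpSum φ s x = 0 :=
  Finset.sum_eq_zero fun k _ => by
    rw [hφ _ (mt (smul_sub_gridCenter_mem_closedBall_iff hN).1 (hx k)), mul_zero]

theorem abs_bumpSum_le (hN : 0 < N) (hρ : ρ < 1 / 2) (hφ : ∀ y ∉ Metric.closedBall 0 ρ, φ y = 0)
    {δ C : ℝ} (hδ : 0 ≤ δ) (hs : ∀ k, |s k| ≤ δ) (hC : ∀ y, |φ y| ≤ C) (x : Fin m → ℝ) :
    |bumpSum φ s x| ≤ δ * C := by
  by_cases h : ∃ k : Fin m → Fin N, x ∈ gridBall ρ k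
  · obtain ⟨k, hk⟩ := h
    rw [bumpSum_of_mem_gridBall hN hρ hφ hk, abs_mul]
    exact mul_le_mul (hs k) (hC _) (abs_nonneg _) hδ
  · rw [bumpSum_of_forall_notMem_gridBall hN hφ (not_exists.1 h), abs_zero]
    exact mul_nonneg hδ ((abs_nonneg _).trans (hC x))

end Support

theorem contDiff_bumpSum {φ : (Fin m → ℝ) → ℝ} (hφ : ContDiff ℝ (⊤ : ℕ∞) φ)
    (s : (Fin m → Fin N) → ℝ) : ContDiff ℝ (⊤ : ℕ∞) (bumpSum φ s) := by
  unfold bumpSum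
  fun_prop

theorem partial_bumpSum {φ : (Fin m → ℝ) → ℝ} (hφ : Differentiable ℝ φ)
    (s : (Fin m → Fin N) → ℝ) (i : Fin m) :
    (fun x => fderiv ℝ (bumpSum φ s) x (Pi.single i 1)) =
      bumpSum (fun y => fderiv ℝ φ y (Pi.single i 1)) fun k => N * s k := by
  funext x
  have hterm : ∀ k : Fin m → Fin N, fderiv ℝ (fun x => s k * φ ((N : ℝ) • (x - gridCenter k))) x =
      s k • (N : ℝ) • fderiv ℝ φ ((N : ℝ) • (x - gridCenter k)) := fun k => by
    rw [fderiv_const_mul (by fun_prop),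
      fderiv_comp_sub (f := fun y => φ ((N : ℝ) • y)), fderiv_comp_smul]
  unfold bumpSum
  rw [fderiv_fun_sum fun k _ => by fun_prop, sum_apply]
  refine Finset.sum_congr rfl fun k _ => ?_
  rw [hterm, smul_apply, smul_apply, smul_eq_mul, smul_eq_mul]
  ring

theorem pderivList_bumpSum (l : List (Fin m)) {φ : (Fin m → ℝ) → ℝ} (hφ : ContDiff ℝ (⊤ : ℕ∞) φ)
    (s : (Fin m → Fin N) → ℝ) :
    pderivList l (bumpSum φ s) = bumpSum (pderivList l φ) fun k => (N : ℝ) ^ l.length * s k := by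
  induction l generalizing φ s with
  | nil => simp [pderivList]
  | cons i l ih =>
    simp only [pderivList]
    rw [partial_bumpSum (hφ.differentiable (by simp)), ih (contDiff_partial hφ i)]
    simp only [List.length_cons, pow_succ, mul_assoc]

theorem tsupport_pderivList_subset (l : List (Fin m)) (φ : (Fin m → ℝ) → ℝ) :
    tsupport (pderivList l φ) ⊆ tsupport φ := by
  induction l generalizing φ with
  | nil => rfl
  | cons i l ih => exact (ih _).trans (tsupport_fderiv_apply_subset ℝ _)

theorem exists_forall_abs_pderivList_le (L : ℕ) {φ : (Fin m → ℝ) → ℝ}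
    (hφ : ContDiff ℝ (⊤ : ℕ∞) φ) (hc : HasCompactSupport φ) :
    ∃ C > 0, ∀ l : List (Fin m), l.length ≤ L → ∀ x, |pderivList l φ x| ≤ C := by
  choose C hC using fun l : List (Fin m) =>
    (hc.mono' (subset_closure.trans (tsupport_pderivList_subset l φ))).exists_bound_of_continuous
      (contDiff_pderivList l hφ).continuous
  obtain ⟨B, hB⟩ := ((List.finite_length_le (Fin m) L).image C).bddAbove
  refine ⟨max 1 B, by positivity, fun l hl x => ?_⟩
  exact (hC l x).trans ((hB (mem_image_of_mem C hl)).trans (le_max_right _ _))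

/-- The smooth bump placed in each grid cell. In units of the side of the cell, it is `1` up to
distance `1 / 6` from the centre and vanishes from distance `1 / 3` on. -/
def cellBump (m : ℕ) : ContDiffBump (0 : Fin m → ℝ) where
  rIn := 1 / 6
  rOut := 1 / 3
  rIn_pos := by norm_num
  rIn_lt_rOut := by norm_num

theorem cellBump_eq_zero : ∀ y ∉ Metric.closedBall 0 (1 / 3), cellBump m y = 0 := fun _ hy =>
  (cellBump m).zero_of_le_dist (not_le.1 hy).le

theorem exists_bumpSum_mem_HolderBall (m : ℕ) (β : ℝ) {B : ℝ} (hB : 0 < B) :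
    ∃ b > 0, ∀ N : ℕ, 0 < N → ∀ s : (Fin m → Fin N) → ℝ, (∀ k, |s k| ≤ b * (N : ℝ) ^ (-β)) →
      bumpSum (cellBump m) s ∈ HolderBall m β B := by
  obtain ⟨C, hC0, hC⟩ := exists_forall_abs_pderivList_le ⌈β⌉₊ (cellBump m).contDiff
    (cellBump m).hasCompactSupport
  refine ⟨B / (m + 3) / C, by positivity, fun N hN s hs => ?_⟩
  have hN0 : (0 : ℝ) < N := by exact_mod_cast hN
  rw [show B = (m + 3) * (B / (m + 3)) by field_simp]
  refine mem_HolderBall_of_abs_pderivList_le (M := N) (by positivity) (by exact_mod_cast hN)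
    (contDiff_bumpSum (cellBump m).contDiff s) fun l hl x _ => ?_
  have hsupp : ∀ y ∉ Metric.closedBall 0 (1 / 3), pderivList l (cellBump m) y = 0 := fun y hy =>
    image_eq_zero_of_notMem_tsupport fun h =>
      hy ((cellBump m).tsupport_eq.subset (tsupport_pderivList_subset l _ h))
  have hscaled : ∀ k, |(N : ℝ) ^ l.length * s k| ≤
      (N : ℝ) ^ l.length * (B / (m + 3) / C * (N : ℝ) ^ (-β)) := fun k => by
    rw [abs_mul, abs_of_nonneg (by positivity : (0 : ℝ) ≤ (N : ℝ) ^ l.length)]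
    exact mul_le_mul_of_nonneg_left (hs k) (by positivity)
  calc |pderivList l (bumpSum (cellBump m) s) x|
      ≤ (N : ℝ) ^ l.length * (B / (m + 3) / C * (N : ℝ) ^ (-β)) * C := by
        rw [pderivList_bumpSum l (cellBump m).contDiff]
        exact abs_bumpSum_le hN (by norm_num) hsupp (by positivity) hscaled (hC l hl) x
    _ = B / (m + 3) * (N : ℝ) ^ ((l.length : ℝ) - β) := by
        rw [sub_eq_add_neg, Real.rpow_add hN0, Real.rpow_natCast]
        field_simp

end BumpSum

/-! ## Iterated power maps and compositions -/

section PowMap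

variable {c γ : ℝ}

theorem powMap_zero (c : ℝ) (hγ : γ ≠ 0) : powMap c γ 0 = 0 := by
  rw [powMap, Real.zero_rpow hγ, mul_zero]

theorem powMap_nonneg (hc : 0 ≤ c) (γ : ℝ) {t : ℝ} (ht : 0 ≤ t) : 0 ≤ powMap c γ t :=
  mul_nonneg hc (Real.rpow_nonneg ht γ)

theorem mapsTo_powMap_Icc {B : ℝ} (hc : 0 ≤ c) (hγ : 0 ≤ γ) (hcB : c ≤ B) (hB : B ≤ 1) :
    MapsTo (powMap c γ) (Icc 0 B) (Icc 0 B) := fun _ ht =>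
  ⟨powMap_nonneg hc γ ht.1,
    (mul_le_of_le_one_right hc (Real.rpow_le_one ht.1 (ht.2.trans hB) hγ)).trans hcB⟩

theorem powMap_iterate_pos (hc : 0 < c) (γ : ℝ) (q : ℕ) {t : ℝ} (ht : 0 < t) :
    0 < (powMap c γ)^[q] t :=
  MapsTo.iterate (s := Ioi 0) (fun _ ht => mul_pos hc (Real.rpow_pos_of_pos ht _)) q ht

theorem monotoneOn_powMap_iterate (hc : 0 ≤ c) (hγ : 0 ≤ γ) (q : ℕ) :
    MonotoneOn (powMap c γ)^[q] (Ici 0) := by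
  induction q with
  | zero => exact monotone_id.monotoneOn _
  | succ q ih =>
    refine ih.comp (fun s hs t _ hst => ?_) fun t ht => powMap_nonneg hc γ ht
    exact mul_le_mul_of_nonneg_left (Real.rpow_le_rpow hs hst hγ) hc

theorem powMap_iterate_mul (hc : 0 ≤ c) (q : ℕ) {b y : ℝ} (hb : 0 ≤ b) (hy : 0 ≤ y) :
    (powMap c γ)^[q] (b * y) = (powMap c γ)^[q] b * y ^ γ ^ q := by
  induction q generalizing b y with
  | zero => simp
  | succ q ih =>
    have h : powMap c γ (b * y) = powMap c γ b * y ^ γ := by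
      rw [powMap, powMap, Real.mul_rpow hb hy, mul_assoc]
    rw [Function.iterate_succ_apply, h, ih (powMap_nonneg hc γ hb) (Real.rpow_nonneg hy _),
      Function.iterate_succ_apply, ← Real.rpow_mul hy, pow_succ']

theorem measurable_powMap (c γ : ℝ) : Measurable (powMap c γ) :=
  (measurable_id.pow_const γ).const_mul c

end PowMap

section Composition

variable {m K dstar : ℕ} {β r ρ : ℝ} {h : (Fin m → ℝ) → ℝ}

theorem GH_mono (hρ : ρ ≤ r) : GH m dstar β ρ ⊆ GH m dstar β r :=
  fun _ ⟨e, g, he, hg, hfg⟩ => ⟨e, g, he, HolderBall_mono hρ hg, hfg⟩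

theorem const_add_mem_GH (a : ℝ) (hρ : 0 ≤ ρ) (hh : h ∈ GH m dstar β ρ) :
    (fun x => a + h x) ∈ GH m dstar β (|a| + ρ) :=
  let ⟨e, _, he, hg, hhg⟩ := hh
  ⟨e, _, he, const_add_mem_HolderBall a hρ hg, fun x hx => congrArg (a + ·) (hhg x hx)⟩

theorem comp_castLE_mem_GH (hm : dstar ≤ m) {g : (Fin dstar → ℝ) → ℝ}
    (hg : g ∈ HolderBall dstar β r) : (fun x => g (x ∘ Fin.castLE hm)) ∈ GH m dstar β r :=
  ⟨Fin.castLE hm, g, Fin.strictMono_castLE hm, hg, fun _ _ => rfl⟩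

theorem comp_const_mem_GCH_succ {q : ℕ} {g : (Fin K → ℝ) → ℝ} (hh : h ∈ GH m dstar β r)
    (hmaps : MapsTo h (cube m) (Icc 0 1)) (hg : g ∈ GCH K dstar β r q K) :
    (fun x => g fun _ => h x) ∈ GCH K dstar β r (q + 1) m :=
  ⟨fun x _ => h x, g, fun _ => hh, fun _ hx _ _ => hmaps hx, hg, fun _ _ => rfl⟩

theorem const_add_powMap_iterate_comp_mem_GCH (hdstar : 0 < dstar) (hβ : 0 < β) {a c : ℝ}
    (hc0 : 0 ≤ c) (hc1 : c ≤ 1) (hcρ : (dstar + 3) * c ≤ ρ) (hr : |a| + ρ ≤ r) {q : ℕ}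
    (hK : dstar * q ≤ K * q) (hh : h ∈ GH m dstar β ρ) (hmaps : MapsTo h (cube m) (Icc 0 1)) :
    (fun x => a + (powMap c (min 1 β))^[q] (h x)) ∈ GCH K dstar β r q m := by
  have hρ : 0 ≤ ρ := le_trans (by positivity) hcρ
  induction q generalizing m with
  | zero => exact ⟨_, GH_mono hr (const_add_mem_GH a hρ hh), fun _ _ => rfl⟩
  | succ q ih =>
    have hK' : dstar ≤ K := Nat.le_of_mul_le_mul_right hK q.succ_pos
    let i : Fin dstar := ⟨0, hdstar⟩
    have hpow : (fun x : Fin K → ℝ => powMap c (min 1 β) (x (Fin.castLE hK' i))) ∈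
        GH K dstar β ρ :=
      GH_mono hcρ (comp_castLE_mem_GH hK' (powMap_apply_mem_HolderBall hβ hc0 i))
    refine comp_const_mem_GCH_succ (GH_mono ?_ hh) hmaps
      (ih (Nat.mul_le_mul_right q hK') hpow fun x hx => ?_)
    · linarith [abs_nonneg a]
    · exact mapsTo_powMap_Icc hc0 (by positivity) hc1 le_rfl (hx _ trivial)

end Composition

section BumpEta

variable {d dstar N : ℕ} (hd : dstar ≤ d) {Φ : ℝ → ℝ} {δ : ℝ}

/-- The regression function of the hypercube with index `σ`: the outer function `Φ` applied to
the sum of the grid bumps of height `δ` selected by `σ`, shifted so that its values are centred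
at `1 / 2`. It depends on the first `dstar` coordinates only. -/
def bumpEta (Φ : ℝ → ℝ) (δ : ℝ) (σ : (Fin dstar → Fin N) → Bool) (x : Fin d → ℝ) : ℝ :=
  (1 / 2 - Φ δ / 2) +
    Φ (bumpSum (cellBump dstar) (fun k => if σ k then δ else 0) (x ∘ Fin.castLE hd))

theorem bumpSum_cellBump_mem_Icc (hN : 0 < N) (hδ : 0 ≤ δ) (σ : (Fin dstar → Fin N) → Bool)
    (x : Fin dstar → ℝ) :
    bumpSum (cellBump dstar) (fun k => if σ k then δ else 0) x ∈ Icc 0 δ := by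
  have hheight : ∀ k, (if σ k then δ else 0) ∈ Icc 0 δ := fun k => by split_ifs <;> simp [hδ]
  refine ⟨Finset.sum_nonneg fun k _ => mul_nonneg (hheight k).1 (cellBump dstar).nonneg,
    (le_abs_self _).trans ?_⟩
  simpa using abs_bumpSum_le hN (by norm_num) cellBump_eq_zero (C := 1) hδ
    (fun k => by rw [abs_of_nonneg (hheight k).1]; exact (hheight k).2)
    (fun y => by rw [abs_of_nonneg (cellBump dstar).nonneg]; exact (cellBump dstar).le_one) x

theorem measurable_bumpEta (hΦ : Measurable Φ) (σ : (Fin dstar → Fin N) → Bool) :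
    Measurable (bumpEta hd Φ δ σ) := by
  refine measurable_const.add (hΦ.comp
    ((contDiff_bumpSum (cellBump dstar).contDiff _).continuous.measurable.comp ?_))
  fun_prop

theorem bumpEta_mem_Icc (hN : 0 < N) (hΦ : MonotoneOn Φ (Ici 0)) (hΦ0 : Φ 0 = 0) (hδ : 0 ≤ δ)
    (σ : (Fin dstar → Fin N) → Bool) (x : Fin d → ℝ) :
    bumpEta hd Φ δ σ x ∈ Icc (1 / 2 - Φ δ / 2) (1 / 2 + Φ δ / 2) := by
  have h := bumpSum_cellBump_mem_Icc hN hδ σ (x ∘ Fin.castLE hd)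
  have hlower := hΦ self_mem_Ici h.1 h.1
  have hupper := hΦ h.1 hδ h.2
  rw [bumpEta]
  constructor <;> linarith

theorem bumpEta_of_mem_gridBall (hN : 0 < N) (hΦ0 : Φ 0 = 0) (σ : (Fin dstar → Fin N) → Bool)
    {k : Fin dstar → Fin N} {x : Fin d → ℝ} (hx : x ∘ Fin.castLE hd ∈ gridBall (1 / 6) k) :
    bumpEta hd Φ δ σ x = if σ k then 1 / 2 + Φ δ / 2 else 1 / 2 - Φ δ / 2 := by
  have hx' : x ∘ Fin.castLE hd ∈ gridBall (1 / 3) k :=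
    Metric.closedBall_subset_closedBall (by gcongr; norm_num) hx
  have hone : cellBump dstar ((N : ℝ) • (x ∘ Fin.castLE hd - gridCenter k)) = 1 :=
    (cellBump dstar).one_of_mem_closedBall ((smul_sub_gridCenter_mem_closedBall_iff hN).2 hx)
  rw [bumpEta, bumpSum_of_mem_gridBall hN (by norm_num) cellBump_eq_zero hx', hone, mul_one]
  split_ifs
  · ring
  · rw [hΦ0, add_zero]

theorem bumpEta_congr (hN : 0 < N) {σ σ' : (Fin dstar → Fin N) → Bool} {k : Fin dstar → Fin N}
    (hσ : ∀ k' ≠ k, σ k' = σ' k') {x : Fin d → ℝ}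
    (hx : x ∘ Fin.castLE hd ∉ gridBall (1 / 3) k) :
    bumpEta hd Φ δ σ x = bumpEta hd Φ δ σ' x := by
  rw [bumpEta, bumpEta]
  congr 2
  refine Finset.sum_congr rfl fun k' _ => ?_
  rcases eq_or_ne k' k with rfl | hk
  · rw [cellBump_eq_zero _ (mt (smul_sub_gridCenter_mem_closedBall_iff hN).1 hx), mul_zero,
      mul_zero]
  · simp only [hσ k' hk]

theorem exists_bumpEta_mem_GCH (hdstar : 0 < dstar) {β r : ℝ} (hβ : 0 < β) (hr : 1 / 2 < r) :
    ∃ b ∈ Ioc (0 : ℝ) (1 / 4), ∃ c ∈ Ioc (0 : ℝ) (1 / 4), ∀ (d K N q : ℕ) (hd : dstar ≤ d),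
      dstar * q ≤ K * q → 0 < N → ∀ σ : (Fin dstar → Fin N) → Bool,
        bumpEta hd (powMap c (min 1 β))^[q] (b * (N : ℝ) ^ (-β)) σ ∈ GCH K dstar β r q d := by
  have hr' : 0 < r - 1 / 2 := sub_pos.2 hr
  obtain ⟨b, hb0, hb⟩ := exists_bumpSum_mem_HolderBall dstar β hr'
  refine ⟨min b (1 / 4), ⟨by positivity, min_le_right _ _⟩,
    min (1 / 4) ((r - 1 / 2) / (dstar + 3)), ⟨by positivity, min_le_left _ _⟩,
    fun d K N q hd hK hN σ => ?_⟩
  set c := min (1 / 4) ((r - 1 / 2) / (dstar + 3))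
  set δ := min b (1 / 4) * (N : ℝ) ^ (-β)
  have hc : c * (dstar + 3) ≤ r - 1 / 2 := (le_div_iff₀ (by positivity)).1 (min_le_right _ _)
  have hN1 : (N : ℝ) ^ (-β) ≤ 1 :=
    Real.rpow_le_one_of_one_le_of_nonpos (by exact_mod_cast hN) (by linarith)
  have hδ : δ ∈ Icc (0 : ℝ) (1 / 4) :=
    ⟨by positivity, (mul_le_of_le_one_right (by positivity) hN1).trans (min_le_right _ _)⟩
  have hΦδ := (mapsTo_powMap_Icc (by positivity) (by positivity : 0 ≤ min 1 β)
    (min_le_left _ _ : c ≤ 1 / 4) (by norm_num)).iterate q hδ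
  refine const_add_powMap_iterate_comp_mem_GCH hdstar hβ (by positivity)
    ((min_le_left _ _).trans (by norm_num)) (by linarith) ?_ hK
    (comp_castLE_mem_GH hd (hb N hN (fun k => if σ k then δ else 0) fun k => ?_))
    fun x _ => Icc_subset_Icc_right (by linarith [hδ.2]) (bumpSum_cellBump_mem_Icc hN hδ.1 σ _)
  · rw [abs_of_nonneg (by linarith [hΦδ.2])]
    linarith [hΦδ.1]
  · calc |if σ k then δ else 0| ≤ δ := by split_ifs <;> simp [abs_of_nonneg, hδ.1]
      _ ≤ b * (N : ℝ) ^ (-β) :=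
        mul_le_mul_of_nonneg_right (min_le_left _ _) (by positivity)

end BumpEta

/-! ## Testing two product measures -/

section Iid

variable {α : Type*} [MeasurableSpace α]

theorem measurable_snoc (n : ℕ) :
    Measurable fun p : (Fin n → α) × α => (Fin.snoc p.1 p.2 : Fin (n + 1) → α) := by
  refine measurable_pi_lambda _ fun i => ?_
  refine Fin.lastCases ?_ (fun j => ?_) i
  · simpa using measurable_snd
  · simp only [Fin.snoc_castSucc]
    exact (measurable_pi_apply j).comp measurable_fst

theorem lintegral_iid_succ (μ : Measure α) [SFinite μ] {n : ℕ} {F : (Fin (n + 1) → α) → ℝ≥0∞}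
    (hF : Measurable F) :
    ∫⁻ ω, F ω ∂iid μ (n + 1) = ∫⁻ ω, ∫⁻ a, F (Fin.snoc ω a) ∂μ ∂iid μ n := by
  have hsec : ∀ ω : Fin n → α, Measurable fun a : α => (Fin.snoc ω a : Fin (n + 1) → α) :=
    fun ω => (measurable_snoc n).comp measurable_prodMk_left
  have hker : Measurable fun ω : Fin n → α => μ.map fun a => (Fin.snoc ω a : Fin (n + 1) → α) := by
    refine Measure.measurable_of_measurable_coe _ fun s hs => ?_
    simp only [Measure.map_apply (hsec _) hs]
    exact measurable_measure_prodMk_left (measurable_snoc n hs)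
  rw [iid, Measure.lintegral_bind hker.aemeasurable hF.aemeasurable]
  exact lintegral_congr fun ω => lintegral_map hF (hsec ω)

instance isProbabilityMeasure_iid (μ : Measure α) [IsProbabilityMeasure μ] (n : ℕ) :
    IsProbabilityMeasure (iid μ n) := by
  induction n with
  | zero => exact Measure.dirac.isProbabilityMeasure
  | succ n ih =>
    refine ⟨?_⟩
    rw [← lintegral_one, lintegral_iid_succ μ measurable_const]
    simp

theorem lintegral_iid_prod (μ : Measure α) [SFinite μ] {g : α → ℝ≥0∞} (hg : Measurable g) (n : ℕ) :
    ∫⁻ ω, ∏ i, g (ω i) ∂iid μ n = (∫⁻ a, g a ∂μ) ^ n := by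
  induction n with
  | zero => simp [iid]
  | succ n ih =>
    rw [lintegral_iid_succ μ (by fun_prop)]
    simp only [Fin.prod_univ_castSucc, Fin.snoc_castSucc, Fin.snoc_last,
      lintegral_const_mul _ hg]
    rw [lintegral_mul_const _ (by fun_prop), ih, pow_succ]

theorem lintegral_iid_withDensity (μ : Measure α) [SFinite μ] {f : α → ℝ≥0∞} (hf : Measurable f)
    [SFinite (μ.withDensity f)] {n : ℕ} {F : (Fin n → α) → ℝ≥0∞} (hF : Measurable F) :
    ∫⁻ ω, F ω ∂iid (μ.withDensity f) n = ∫⁻ ω, (∏ i, f (ω i)) * F ω ∂iid μ n := by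
  induction n with
  | zero => simp [iid, lintegral_dirac]
  | succ n ih =>
    have hF' : Measurable fun q : (Fin n → α) × α => F (Fin.snoc q.1 q.2) :=
      hF.comp (measurable_snoc n)
    rw [lintegral_iid_succ _ hF, lintegral_iid_succ μ (by fun_prop), ih hF'.lintegral_prod_right']
    refine lintegral_congr fun ω => ?_
    have hω : Measurable fun a => F (Fin.snoc ω a) := hF'.comp measurable_prodMk_left
    rw [lintegral_withDensity_eq_lintegral_mul _ hf hω, ← lintegral_const_mul _ (hf.mul hω)]
    simp only [Fin.prod_univ_castSucc, Fin.snoc_castSucc, Fin.snoc_last, Pi.mul_apply, mul_assoc]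

theorem iid_withDensity (μ : Measure α) [SFinite μ] {f : α → ℝ≥0∞} (hf : Measurable f)
    [SFinite (μ.withDensity f)] (n : ℕ) :
    iid (μ.withDensity f) n = (iid μ n).withDensity fun ω => ∏ i, f (ω i) := by
  refine Measure.ext_of_lintegral _ fun F hF => ?_
  rw [lintegral_iid_withDensity μ hf hF, lintegral_withDensity_eq_lintegral_mul _ (by fun_prop) hF]
  rfl

/-- The Hellinger affinity `∫ √(f g) dμ` of the measures with densities `f` and `g` with respect to
`μ`; it measures how hard the two measures are to tell apart. -/
def affinity (μ : Measure α) (f g : α → ℝ≥0∞) : ℝ≥0∞ :=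
  ∫⁻ a, f a ^ (1 / 2 : ℝ) * g a ^ (1 / 2 : ℝ) ∂μ

theorem affinity_iid (μ : Measure α) [SFinite μ] {f g : α → ℝ≥0∞} (hf : Measurable f)
    (hg : Measurable g) (n : ℕ) :
    affinity (iid μ n) (fun ω => ∏ i, f (ω i)) (fun ω => ∏ i, g (ω i)) = affinity μ f g ^ n := by
  rw [affinity, affinity, ← lintegral_iid_prod μ (by fun_prop)]
  simp only [Finset.prod_mul_distrib, ENNReal.prod_rpow_of_nonneg one_half_pos.le]

theorem rpow_half_mul_rpow_half_le (x y : ℝ≥0∞) :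
    x ^ (1 / 2 : ℝ) * y ^ (1 / 2 : ℝ) ≤ x + y / 4 := by
  have hmul : 2 * x * (y / 2) = x * y := by
    rw [mul_comm 2 x, mul_assoc, ENNReal.mul_div_cancel two_ne_zero ofNat_ne_top]
  have hdiv : y / 2 / 2 = y / 4 := by
    rw [div_eq_mul_inv, div_eq_mul_inv, mul_assoc,
      ← ENNReal.mul_inv (.inl two_ne_zero) (.inl ofNat_ne_top), div_eq_mul_inv]
    norm_num
  have hyoung := ENNReal.young_inequality ((2 * x) ^ (1 / 2 : ℝ)) ((y / 2) ^ (1 / 2 : ℝ))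
    Real.HolderConjugate.two_two
  rwa [← ENNReal.mul_rpow_of_nonneg _ _ one_half_pos.le, hmul,
    ENNReal.mul_rpow_of_nonneg _ _ one_half_pos.le, ← ENNReal.rpow_mul, ← ENNReal.rpow_mul,
    one_div_mul_cancel two_ne_zero, ENNReal.rpow_one, ENNReal.rpow_one, ENNReal.ofReal_ofNat,
    mul_comm 2 x, ENNReal.mul_div_cancel_right two_ne_zero ofNat_ne_top, hdiv] at hyoung

theorem affinity_le_add {μ : Measure α} {f g : α → ℝ≥0∞} (hf : Measurable f) (hg : Measurable g)
    [IsProbabilityMeasure (μ.withDensity f)] [IsProbabilityMeasure (μ.withDensity g)] {E : Set α}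
    (hE : MeasurableSet E) :
    affinity μ f g ≤ μ.withDensity f E + μ.withDensity g Eᶜ + 1 / 2 := by
  have hf1 : μ.withDensity f Eᶜ ≤ 1 := prob_le_one
  have hg1 : μ.withDensity g E ≤ 1 := prob_le_one
  rw [affinity, ← lintegral_add_compl _ hE]
  calc (∫⁻ a in E, f a ^ (1 / 2 : ℝ) * g a ^ (1 / 2 : ℝ) ∂μ) +
        ∫⁻ a in Eᶜ, f a ^ (1 / 2 : ℝ) * g a ^ (1 / 2 : ℝ) ∂μ
      ≤ (∫⁻ a in E, (f a + g a / 4) ∂μ) + ∫⁻ a in Eᶜ, (g a + f a / 4) ∂μ := by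
        gcongr with a a
        · exact rpow_half_mul_rpow_half_le _ _
        · rw [mul_comm]
          exact rpow_half_mul_rpow_half_le _ _
    _ = (μ.withDensity f E + μ.withDensity g E / 4) +
          (μ.withDensity g Eᶜ + μ.withDensity f Eᶜ / 4) := by
        simp only [div_eq_mul_inv, withDensity_apply _ hE, withDensity_apply _ hE.compl,
          lintegral_add_left hf, lintegral_add_left hg, lintegral_mul_const _ hf,
          lintegral_mul_const _ hg]
    _ ≤ (μ.withDensity f E + 1 / 4) + (μ.withDensity g Eᶜ + 1 / 4) := by gcongr
    _ = _ := by
        rw [add_add_add_comm, ENNReal.div_add_div_same, one_add_one_eq_two,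
          (ENNReal.div_eq_div_iff (by norm_num) (by norm_num) (by norm_num) (by norm_num)).2
            (by norm_num : (2 : ℝ≥0∞) * 2 = 4 * 1)]

theorem affinity_pow_le_iid_add_iid {μ : Measure α} [SFinite μ] {f g : α → ℝ≥0∞}
    (hf : Measurable f) (hg : Measurable g) [IsProbabilityMeasure (μ.withDensity f)]
    [IsProbabilityMeasure (μ.withDensity g)] {n : ℕ} {E : Set (Fin n → α)}
    (hE : MeasurableSet E) :
    affinity μ f g ^ n ≤ iid (μ.withDensity f) n E + iid (μ.withDensity g) n Eᶜ + 1 / 2 := by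
  have hf' : IsProbabilityMeasure (iid (μ.withDensity f) n) := inferInstance
  have hg' : IsProbabilityMeasure (iid (μ.withDensity g) n) := inferInstance
  rw [iid_withDensity μ hf] at hf' ⊢
  rw [iid_withDensity μ hg] at hg' ⊢
  rw [← affinity_iid μ hf hg]
  exact affinity_le_add (by fun_prop) (by fun_prop) hE

theorem one_le_pow_add_mul {a x : ℝ≥0∞} (h : 1 ≤ a + x) (n : ℕ) : 1 ≤ a ^ n + n * x := by
  induction n with
  | zero => simp
  | succ n ih =>
    rcases le_total a 1 with ha | ha
    · calc 1 ≤ a ^ n * 1 + n * x := by rwa [mul_one]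
        _ ≤ a ^ n * (a + x) + n * x := by gcongr
        _ ≤ a ^ (n + 1) + 1 * x + n * x := by
          rw [mul_add, pow_succ]
          gcongr
          exact pow_le_one₀ zero_le ha
        _ = a ^ (n + 1) + (n + 1 : ℕ) * x := by push_cast; ring
    · exact (one_le_pow₀ ha).trans le_self_add

end Iid

/-! ## Joint distributions of inputs and labels -/

section Joint

variable {d : ℕ} {η η' : (Fin d → ℝ) → ℝ} {Q : Measure (Fin d → ℝ)}

theorem lintegral_jointMeasure (hη : Measurable η) {F : (Fin d → ℝ) × ℝ → ℝ≥0∞}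
    (hF : Measurable F) :
    ∫⁻ p, F p ∂jointMeasure η Q =
      ∫⁻ x, (ENNReal.ofReal (η x) * F (x, 1) + ENNReal.ofReal (1 - η x) * F (x, -1)) ∂Q := by
  have hker : Measurable fun x : Fin d → ℝ =>
      ENNReal.ofReal (η x) • Measure.dirac (x, (1 : ℝ)) +
        ENNReal.ofReal (1 - η x) • Measure.dirac (x, (-1 : ℝ)) := by
    refine Measure.measurable_of_measurable_coe _ fun s hs => ?_
    simp only [Measure.add_apply, Measure.smul_apply, smul_eq_mul, Measure.dirac_apply' _ hs]
    have h1 : ∀ y : ℝ, Measurable fun x : Fin d → ℝ => s.indicator (fun _ => (1 : ℝ≥0∞)) (x, y) :=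
      fun y => (measurable_const.indicator hs).comp measurable_prodMk_right
    exact (hη.ennreal_ofReal.mul (h1 _)).add ((measurable_const.sub hη).ennreal_ofReal.mul (h1 _))
  rw [jointMeasure, Measure.lintegral_bind hker.aemeasurable hF.aemeasurable]
  refine lintegral_congr fun x => ?_
  rw [lintegral_add_measure, lintegral_smul_measure, lintegral_smul_measure,
    lintegral_dirac' _ hF, lintegral_dirac' _ hF, smul_eq_mul, smul_eq_mul]

theorem isProbabilityMeasure_jointMeasure [IsProbabilityMeasure Q] (hη : Measurable η)
    (hη01 : ∀ x, η x ∈ Icc (0 : ℝ) 1) : IsProbabilityMeasure (jointMeasure η Q) := by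
  refine ⟨?_⟩
  rw [← lintegral_one, lintegral_jointMeasure hη measurable_const]
  simp only [mul_one, ← ENNReal.ofReal_add (hη01 _).1 (sub_nonneg.2 (hη01 _).2)]
  simp

/-- The density of `jointMeasure η Q` with respect to the product of `Q` with the counting measure
on the labels `±1`. -/
def labelDensity (η : (Fin d → ℝ) → ℝ) (p : (Fin d → ℝ) × ℝ) : ℝ≥0∞ :=
  ENNReal.ofReal (if p.2 = 1 then η p.1 else 1 - η p.1)

theorem labelDensity_one (η : (Fin d → ℝ) → ℝ) (x : Fin d → ℝ) :
    labelDensity η (x, 1) = ENNReal.ofReal (η x) := by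
  simp [labelDensity]

theorem labelDensity_neg_one (η : (Fin d → ℝ) → ℝ) (x : Fin d → ℝ) :
    labelDensity η (x, -1) = ENNReal.ofReal (1 - η x) := by
  rw [labelDensity, if_neg (by norm_num)]

theorem measurable_labelDensity (hη : Measurable η) : Measurable (labelDensity η) :=
  (Measurable.ite (measurable_snd (measurableSet_singleton 1)) (hη.comp measurable_fst)
    (measurable_const.sub (hη.comp measurable_fst))).ennreal_ofReal

theorem lintegral_prod_labels [SFinite Q] {F : (Fin d → ℝ) × ℝ → ℝ≥0∞} (hF : Measurable F) :
    ∫⁻ p, F p ∂Q.prod (Measure.dirac (1 : ℝ) + Measure.dirac (-1)) =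
      ∫⁻ x, (F (x, 1) + F (x, -1)) ∂Q := by
  rw [lintegral_prod _ hF.aemeasurable]
  refine lintegral_congr fun x => ?_
  have hx : Measurable fun y => F (x, y) := hF.comp measurable_prodMk_left
  rw [lintegral_add_measure, lintegral_dirac' _ hx, lintegral_dirac' _ hx]

theorem jointMeasure_eq_withDensity [SFinite Q] (hη : Measurable η) :
    jointMeasure η Q =
      (Q.prod (Measure.dirac (1 : ℝ) + Measure.dirac (-1))).withDensity (labelDensity η) := by
  refine Measure.ext_of_lintegral _ fun F hF => ?_
  have hden := measurable_labelDensity hη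
  rw [lintegral_jointMeasure hη hF, lintegral_withDensity_eq_lintegral_mul _ hden hF,
    lintegral_prod_labels (hden.mul hF)]
  simp only [Pi.mul_apply, labelDensity_one, labelDensity_neg_one]

theorem sub_sq_le_sqrt_mul {x y : ℝ} (hx : x ∈ Icc (1 / 4) (3 / 4)) (hy : y ∈ Icc (1 / 4) (3 / 4)) :
    (x + y) / 2 - (x - y) ^ 2 ≤ √(x * y) := by
  obtain ⟨hx, hx'⟩ := hx
  obtain ⟨hy, hy'⟩ := hy
  refine Real.le_sqrt_of_sq_le ?_
  have hD : (x - y) ^ 2 ≤ x + y - 1 / 4 := by nlinarith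
  nlinarith [mul_nonneg (sq_nonneg (x - y)) (sub_nonneg.2 hD)]

theorem one_le_sqrt_mul_add_sqrt_mul_add {s t : ℝ} (hs : s ∈ Icc (1 / 4) (3 / 4))
    (ht : t ∈ Icc (1 / 4) (3 / 4)) :
    1 ≤ √(s * t) + √((1 - s) * (1 - t)) + 2 * (s - t) ^ 2 := by
  have h1 := sub_sq_le_sqrt_mul hs ht
  have h2 := sub_sq_le_sqrt_mul (x := 1 - s) (y := 1 - t)
    ⟨by linarith [hs.2], by linarith [hs.1]⟩ ⟨by linarith [ht.2], by linarith [ht.1]⟩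
  nlinarith

theorem ofReal_rpow_half_mul {s t : ℝ} (hs : 0 ≤ s) (ht : 0 ≤ t) :
    ENNReal.ofReal s ^ (1 / 2 : ℝ) * ENNReal.ofReal t ^ (1 / 2 : ℝ) = ENNReal.ofReal √(s * t) := by
  rw [← ENNReal.mul_rpow_of_nonneg _ _ one_half_pos.le, ← ENNReal.ofReal_mul hs,
    Real.sqrt_eq_rpow, ENNReal.ofReal_rpow_of_nonneg (mul_nonneg hs ht) one_half_pos.le]

theorem one_le_affinity_add [IsProbabilityMeasure Q] (hη : Measurable η) (hη' : Measurable η')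
    (h : ∀ x, η x ∈ Icc (1 / 4) (3 / 4)) (h' : ∀ x, η' x ∈ Icc (1 / 4) (3 / 4)) :
    1 ≤ affinity (Q.prod (Measure.dirac (1 : ℝ) + Measure.dirac (-1))) (labelDensity η)
      (labelDensity η') + ∫⁻ x, ENNReal.ofReal (2 * (η x - η' x) ^ 2) ∂Q := by
  have hden := measurable_labelDensity hη
  have hden' := measurable_labelDensity hη'
  rw [affinity, lintegral_prod_labels (by fun_prop), ← lintegral_add_right _ (by fun_prop)]
  calc (1 : ℝ≥0∞) = ∫⁻ _, 1 ∂Q := by simp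
    _ ≤ _ := lintegral_mono fun x => ?_
  rw [labelDensity_one, labelDensity_one, labelDensity_neg_one, labelDensity_neg_one,
    ofReal_rpow_half_mul (by linarith [(h x).1]) (by linarith [(h' x).1]),
    ofReal_rpow_half_mul (by linarith [(h x).2]) (by linarith [(h' x).2]),
    ← ENNReal.ofReal_add (Real.sqrt_nonneg _) (Real.sqrt_nonneg _),
    ← ENNReal.ofReal_add (by positivity) (by positivity), ENNReal.one_le_ofReal]
  exact one_le_sqrt_mul_add_sqrt_mul_add (h x) (h' x)

theorem one_half_le_iid_add_iid [IsProbabilityMeasure Q] (hη : Measurable η) (hη' : Measurable η')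
    (h : ∀ x, η x ∈ Icc (1 / 4) (3 / 4)) (h' : ∀ x, η' x ∈ Icc (1 / 4) (3 / 4)) {n : ℕ}
    {E : Set (Fin n → (Fin d → ℝ) × ℝ)} (hE : MeasurableSet E) :
    1 / 2 ≤ iid (jointMeasure η Q) n E + iid (jointMeasure η' Q) n Eᶜ +
      n * ∫⁻ x, ENNReal.ofReal (2 * (η x - η' x) ^ 2) ∂Q := by
  have hIcc : Icc (1 / 4 : ℝ) (3 / 4) ⊆ Icc 0 1 := Icc_subset_Icc (by norm_num) (by norm_num)
  have hP := isProbabilityMeasure_jointMeasure (Q := Q) hη fun x => hIcc (h x)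
  have hP' := isProbabilityMeasure_jointMeasure (Q := Q) hη' fun x => hIcc (h' x)
  rw [jointMeasure_eq_withDensity hη] at hP ⊢
  rw [jointMeasure_eq_withDensity hη'] at hP' ⊢
  have htest := (one_le_pow_add_mul (one_le_affinity_add (Q := Q) hη hη' h h') n).trans
    (add_le_add_left (affinity_pow_le_iid_add_iid (measurable_labelDensity hη)
      (measurable_labelDensity hη') hE) _)
  nth_rewrite 1 [add_right_comm, ← ENNReal.add_halves 1] at htest
  exact (ENNReal.add_le_add_iff_right (ENNReal.div_ne_top one_ne_top two_ne_zero)).1 htest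

end Joint

/-! ## The excess 0-1 risk -/

section ExcessRisk

theorem sgn_eq_one_or (t : ℝ) : sgn t = 1 ∨ sgn t = -1 := by
  unfold sgn
  split_ifs <;> simp

theorem measurable_sgn : Measurable sgn :=
  Measurable.ite measurableSet_Ici measurable_const measurable_const

variable {d : ℕ} {η f : (Fin d → ℝ) → ℝ} {Q : Measure (Fin d → ℝ)}

theorem measurableSet_sgn_ne_label (hf : Measurable f) :
    MeasurableSet {p : (Fin d → ℝ) × ℝ | sgn (f p.1) ≠ p.2} :=
  (measurableSet_eq_fun (measurable_sgn.comp (hf.comp measurable_fst)) measurable_snd).compl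

theorem measurableSet_sgn_ne_sgn {g : (Fin d → ℝ) → ℝ} (hf : Measurable f) (hg : Measurable g) :
    MeasurableSet {x | sgn (f x) ≠ sgn (g x)} :=
  (measurableSet_eq_fun (measurable_sgn.comp hf) (measurable_sgn.comp hg)).compl

theorem jointMeasure_sgn_ne_label (hη : Measurable η) (hf : Measurable f) :
    jointMeasure η Q {p | sgn (f p.1) ≠ p.2} =
      ∫⁻ x, ENNReal.ofReal (if sgn (f x) = 1 then 1 - η x else η x) ∂Q := by
  have hS := measurableSet_sgn_ne_label hf
  rw [← lintegral_indicator_one hS, lintegral_jointMeasure hη (measurable_one.indicator hS)]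
  refine lintegral_congr fun x => ?_
  have hne : (-1 : ℝ) ≠ 1 := by norm_num
  rcases sgn_eq_one_or (f x) with h | h <;> simp [h, hne, hne.symm]

theorem jointMeasure_sgn_ne_label_eq_add (hη : Measurable η) (hη01 : ∀ x, η x ∈ Icc (0 : ℝ) 1)
    (hf : Measurable f) :
    jointMeasure η Q {p | sgn (f p.1) ≠ p.2} =
      jointMeasure η Q {p | sgn (2 * η p.1 - 1) ≠ p.2} +
        ∫⁻ x in {x | sgn (f x) ≠ sgn (2 * η x - 1)}, ENNReal.ofReal |2 * η x - 1| ∂Q := by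
  have hg : Measurable fun x => 2 * η x - 1 := (hη.const_mul 2).sub_const 1
  have hS := measurableSet_sgn_ne_sgn hf hg
  rw [jointMeasure_sgn_ne_label hη hf, jointMeasure_sgn_ne_label hη hg, ← lintegral_indicator hS,
    ← lintegral_add_right _ (hg.abs.ennreal_ofReal.indicator hS)]
  refine lintegral_congr fun x => ?_
  obtain ⟨h0, h1⟩ := hη01 x
  have hne : (-1 : ℝ) ≠ 1 := by norm_num
  by_cases hx : 0 ≤ 2 * η x - 1
  · have hsgn : sgn (2 * η x - 1) = 1 := if_pos hx
    rcases sgn_eq_one_or (f x) with h | h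
    · simp [h, hsgn]
    · simp only [h, hne, hsgn, if_false, if_true, indicator_apply, mem_ofPred_eq, ne_eq,
        not_false_eq_true, abs_of_nonneg hx]
      rw [← ENNReal.ofReal_add (sub_nonneg.2 h1) hx]
      ring_nf
  · have hsgn : sgn (2 * η x - 1) = -1 := if_neg hx
    rcases sgn_eq_one_or (f x) with h | h
    · simp only [h, hne, hne.symm, hsgn, if_false, if_true, indicator_apply, mem_ofPred_eq, ne_eq,
        not_false_eq_true, abs_of_neg (not_le.1 hx)]
      rw [← ENNReal.ofReal_add h0 (by linarith)]
      ring_nf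
    · simp [h, hsgn]

theorem bayes01_jointMeasure [IsProbabilityMeasure Q] (hη : Measurable η)
    (hη01 : ∀ x, η x ∈ Icc (0 : ℝ) 1) :
    bayes01 (jointMeasure η Q) = risk01 (jointMeasure η Q) fun x => 2 * η x - 1 := by
  have := isProbabilityMeasure_jointMeasure (Q := Q) hη hη01
  have : Nonempty {g : (Fin d → ℝ) → ℝ // Measurable g} := ⟨0, measurable_const⟩
  refine le_antisymm (ciInf_le ⟨0, ?_⟩
    (⟨_, (hη.const_mul 2).sub_const 1⟩ : {g : (Fin d → ℝ) → ℝ // Measurable g}))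
    (le_ciInf fun g => ?_)
  · rintro _ ⟨g, rfl⟩
    exact ENNReal.toReal_nonneg
  · refine ENNReal.toReal_mono (measure_ne_top _ _) ?_
    rw [jointMeasure_sgn_ne_label_eq_add hη hη01 g.2]
    exact le_self_add

theorem excess01_jointMeasure [IsProbabilityMeasure Q] (hη : Measurable η)
    (hη01 : ∀ x, η x ∈ Icc (0 : ℝ) 1) (hf : Measurable f) :
    excess01 (jointMeasure η Q) f =
      (∫⁻ x in {x | sgn (f x) ≠ sgn (2 * η x - 1)}, ENNReal.ofReal |2 * η x - 1| ∂Q).toReal := by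
  have := isProbabilityMeasure_jointMeasure (Q := Q) hη hη01
  have hadd := jointMeasure_sgn_ne_label_eq_add (Q := Q) hη hη01 hf
  have hfin := measure_ne_top (jointMeasure η Q) {p | sgn (f p.1) ≠ p.2}
  rw [hadd, ENNReal.add_ne_top] at hfin
  rw [excess01, bayes01_jointMeasure hη hη01, risk01, hadd,
    ENNReal.toReal_add hfin.1 hfin.2, risk01, add_sub_cancel_left]

theorem setLIntegral_abs_le_one [IsProbabilityMeasure Q] (hη01 : ∀ x, η x ∈ Icc (0 : ℝ) 1)
    (S : Set (Fin d → ℝ)) : ∫⁻ x in S, ENNReal.ofReal |2 * η x - 1| ∂Q ≤ 1 :=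
  calc ∫⁻ x in S, ENNReal.ofReal |2 * η x - 1| ∂Q ≤ ∫⁻ _, 1 ∂Q :=
        (setLIntegral_le_lintegral _ _).trans <| lintegral_mono fun x => by
          rw [ENNReal.ofReal_le_one, abs_le]
          constructor <;> linarith [(hη01 x).1, (hη01 x).2]
    _ = 1 := by simp

variable {n : ℕ} {A : Estimator d n}

theorem Estimator.Meas.measurable_uncurry (hA : A.Meas) : Measurable (Function.uncurry A) := hA

theorem expectedExcess01_jointMeasure [IsProbabilityMeasure Q] (hη : Measurable η)
    (hη01 : ∀ x, η x ∈ Icc (0 : ℝ) 1) (hA : A.Meas) :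
    expectedExcess01 (jointMeasure η Q) A =
      (∫⁻ ω, ∫⁻ x in {x | sgn (A ω x) ≠ sgn (2 * η x - 1)}, ENNReal.ofReal |2 * η x - 1| ∂Q
        ∂iid (jointMeasure η Q) n).toReal := by
  have hA' := hA.measurable_uncurry
  have hg : Measurable fun x => 2 * η x - 1 := (hη.const_mul 2).sub_const 1
  have hAω : ∀ ω, Measurable (A ω) := fun ω => hA'.comp measurable_prodMk_left
  have hS : MeasurableSet {p : (Fin n → (Fin d → ℝ) × ℝ) × (Fin d → ℝ) |
      sgn (A p.1 p.2) ≠ sgn (2 * η p.2 - 1)} :=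
    (measurableSet_eq_fun (measurable_sgn.comp hA')
      (measurable_sgn.comp (hg.comp measurable_snd))).compl
  have hmeas : Measurable fun ω => ∫⁻ x in {x | sgn (A ω x) ≠ sgn (2 * η x - 1)},
      ENNReal.ofReal |2 * η x - 1| ∂Q := by
    simp only [← lintegral_indicator (measurableSet_sgn_ne_sgn (hAω _) hg)]
    exact ((hg.abs.ennreal_ofReal.comp measurable_snd).indicator hS).lintegral_prod_right'
  simp only [expectedExcess01, excess01_jointMeasure hη hη01 (hAω _)]
  exact integral_toReal hmeas.aemeasurable (.of_forall fun ω =>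
    (setLIntegral_abs_le_one hη01 _).trans_lt one_lt_top)

theorem lintegral_setLIntegral_abs_le_one [IsProbabilityMeasure Q] (hη : Measurable η)
    (hη01 : ∀ x, η x ∈ Icc (0 : ℝ) 1) (A : Estimator d n) :
    ∫⁻ ω, ∫⁻ x in {x | sgn (A ω x) ≠ sgn (2 * η x - 1)}, ENNReal.ofReal |2 * η x - 1| ∂Q
      ∂iid (jointMeasure η Q) n ≤ 1 := by
  have := isProbabilityMeasure_jointMeasure (Q := Q) hη hη01
  calc _ ≤ ∫⁻ _, 1 ∂iid (jointMeasure η Q) n :=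
        lintegral_mono fun ω => setLIntegral_abs_le_one hη01 _
    _ = 1 := by simp

theorem expectedExcess01_jointMeasure_le_one [IsProbabilityMeasure Q] (hη : Measurable η)
    (hη01 : ∀ x, η x ∈ Icc (0 : ℝ) 1) (hA : A.Meas) :
    expectedExcess01 (jointMeasure η Q) A ≤ 1 := by
  rw [expectedExcess01_jointMeasure hη hη01 hA]
  exact ENNReal.toReal_le_of_le_ofReal zero_le_one
    ((lintegral_setLIntegral_abs_le_one hη hη01 A).trans_eq ENNReal.ofReal_one.symm)

end ExcessRisk

/-! ## Assouad's lower bound -/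

section Assouad

theorem exists_sum_le_two_mul_sum {ι : Type*} [Fintype ι] [DecidableEq ι] {a : ι → ℝ≥0∞}
    {g : ι → (ι → Bool) → ℝ≥0∞} (h : ∀ k σ, a k ≤ g k σ + g k (Function.update σ k (!σ k))) :
    ∃ σ, ∑ k, a k ≤ 2 * ∑ k, g k σ := by
  have hflip : ∀ k, ∑ σ, g k (Function.update σ k (!σ k)) = ∑ σ, g k σ := fun k =>
    Equiv.sum_comp (Function.Involutive.toPerm (fun σ : ι → Bool => Function.update σ k (!σ k))
      fun σ => by simp) (g k)
  by_contra! hlt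
  refine (ENNReal.sum_lt_sum_of_nonempty Finset.univ_nonempty fun σ _ => hlt σ).not_ge ?_
  calc ∑ _σ : ι → Bool, ∑ k, a k
      ≤ ∑ σ, ∑ k, (g k σ + g k (Function.update σ k (!σ k))) := by
        gcongr with σ _ k
        exact h k σ
    _ = ∑ σ, 2 * ∑ k, g k σ := by
        simp only [← Finset.mul_sum]
        rw [Finset.sum_comm, Finset.sum_comm (f := fun σ k => g k σ)]
        simp only [Finset.sum_add_distrib, hflip, two_mul]

/-- The real label `1` or `-1` encoded by a Boolean. -/
def boolLabel (b : Bool) : ℝ := if b then 1 else -1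

theorem sgn_ne_boolLabel_not_iff (t : ℝ) (b : Bool) :
    sgn t ≠ boolLabel !b ↔ ¬ sgn t ≠ boolLabel b := by
  have hne : (-1 : ℝ) ≠ 1 := by norm_num
  cases b <;> rcases sgn_eq_one_or t with h | h <;> simp [boolLabel, h, hne, hne.symm]

variable {d : ℕ} {ι : Type*} {η : (ι → Bool) → (Fin d → ℝ) → ℝ} {T S : ι → Set (Fin d → ℝ)}
  {τ : ℝ} {Q : Measure (Fin d → ℝ)}

/-- A hypercube of conditional class probabilities, as used in Assouad's lemma: the coordinate
`σ k` of the vertex `σ` decides whether `η σ` is `1/2 + τ` or `1/2 - τ` on the core `T k`, and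
influences `η σ` on the cell `S k` only. -/
structure IsHypercube (η : (ι → Bool) → (Fin d → ℝ) → ℝ) (T S : ι → Set (Fin d → ℝ)) (τ : ℝ) :
    Prop where
  pos : 0 < τ
  le_quarter : τ ≤ 1 / 4
  measurable : ∀ σ, Measurable (η σ)
  mem_Icc : ∀ σ x, η σ x ∈ Icc (1 / 2 - τ) (1 / 2 + τ)
  measurableSet_core : ∀ k, MeasurableSet (T k)
  measurableSet_cell : ∀ k, MeasurableSet (S k)
  disjoint_core : Pairwise fun k k' => Disjoint (T k) (T k')
  apply_core : ∀ σ k, ∀ x ∈ T k, η σ x = 1 / 2 + boolLabel (σ k) * τ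
  eq_off_cell : ∀ σ σ' k, (∀ k' ≠ k, σ k' = σ' k') → ∀ x ∉ S k, η σ x = η σ' x

namespace IsHypercube

theorem mem_Icc_quarter (h : IsHypercube η T S τ) (σ : ι → Bool) (x : Fin d → ℝ) :
    η σ x ∈ Icc (1 / 4) (3 / 4) :=
  Icc_subset_Icc (by linarith [h.le_quarter]) (by linarith [h.le_quarter]) (h.mem_Icc σ x)

theorem mem_Icc_zero_one (h : IsHypercube η T S τ) (σ : ι → Bool) (x : Fin d → ℝ) :
    η σ x ∈ Icc 0 1 :=
  Icc_subset_Icc (by norm_num) (by norm_num) (h.mem_Icc_quarter σ x)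

theorem sgn_core (h : IsHypercube η T S τ) (σ : ι → Bool) {k : ι} {x : Fin d → ℝ} (hx : x ∈ T k) :
    sgn (2 * η σ x - 1) = boolLabel (σ k) := by
  rw [h.apply_core σ k x hx]
  cases σ k
  · exact if_neg (by simp [boolLabel]; linarith [h.pos])
  · exact if_pos (by simp [boolLabel]; linarith [h.pos])

theorem abs_core (h : IsHypercube η T S τ) (σ : ι → Bool) {k : ι} {x : Fin d → ℝ} (hx : x ∈ T k) :
    |2 * η σ x - 1| = 2 * τ := by
  rw [h.apply_core σ k x hx, show 2 * (1 / 2 + boolLabel (σ k) * τ) - 1 =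
    boolLabel (σ k) * (2 * τ) by ring, abs_mul, abs_of_pos (a := 2 * τ) (by linarith [h.pos])]
  cases σ k <;> simp [boolLabel]

theorem mul_sum_measure_le_setLIntegral [Fintype ι] (h : IsHypercube η T S τ) (σ : ι → Bool)
    {f : (Fin d → ℝ) → ℝ} (hf : Measurable f) :
    ENNReal.ofReal (2 * τ) * ∑ k, Q.restrict (T k) {x | sgn (f x) ≠ boolLabel (σ k)} ≤
      ∫⁻ x in {x | sgn (f x) ≠ sgn (2 * η σ x - 1)}, ENNReal.ofReal |2 * η σ x - 1| ∂Q := by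
  have hW : ∀ k, MeasurableSet {x | sgn (f x) ≠ boolLabel (σ k)} := fun k =>
    (measurableSet_eq_fun (measurable_sgn.comp hf) measurable_const).compl
  have hWT := fun k => (hW k).inter (h.measurableSet_core k)
  calc ENNReal.ofReal (2 * τ) * ∑ k, Q.restrict (T k) {x | sgn (f x) ≠ boolLabel (σ k)}
      = ∑ k, ∫⁻ x in {x | sgn (f x) ≠ boolLabel (σ k)} ∩ T k,
          ENNReal.ofReal |2 * η σ x - 1| ∂Q := by
        rw [Finset.mul_sum]
        refine Finset.sum_congr rfl fun k _ => ?_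
        rw [setLIntegral_congr_fun (hWT k) fun x hx => by rw [h.abs_core σ hx.2],
          setLIntegral_const, Measure.restrict_apply (hW k)]
    _ = ∫⁻ x in ⋃ k, {x | sgn (f x) ≠ boolLabel (σ k)} ∩ T k,
          ENNReal.ofReal |2 * η σ x - 1| ∂Q := by
        rw [lintegral_iUnion hWT fun k k' hk =>
          (h.disjoint_core hk).mono inter_subset_right inter_subset_right, tsum_fintype]
    _ ≤ _ := by
        refine lintegral_mono_set (iUnion_subset fun k x hx => ?_)
        rw [mem_ofPred_eq, h.sgn_core σ hx.2]
        exact hx.1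

theorem mul_sum_setLIntegral_le [Fintype ι] [SFinite Q] (h : IsHypercube η T S τ) {Ω : Type*}
    [MeasurableSpace Ω] (ν : Measure Ω) [SFinite ν] {A : Ω → (Fin d → ℝ) → ℝ}
    (hA : Measurable (Function.uncurry A)) (σ : ι → Bool) :
    ENNReal.ofReal (2 * τ) * ∑ k, ∫⁻ x in T k, ν {ω | sgn (A ω x) ≠ boolLabel (σ k)} ∂Q ≤
      ∫⁻ ω, ∫⁻ x in {x | sgn (A ω x) ≠ sgn (2 * η σ x - 1)},
        ENNReal.ofReal |2 * η σ x - 1| ∂Q ∂ν := by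
  have hE : ∀ k, MeasurableSet {p : Ω × (Fin d → ℝ) | sgn (A p.1 p.2) ≠ boolLabel (σ k)} :=
    fun k => (measurableSet_eq_fun (measurable_sgn.comp hA) measurable_const).compl
  have hswap : ∀ k, ∫⁻ x in T k, ν {ω | sgn (A ω x) ≠ boolLabel (σ k)} ∂Q =
      ∫⁻ ω, Q.restrict (T k) {x | sgn (A ω x) ≠ boolLabel (σ k)} ∂ν := fun k =>
    (Measure.prod_apply_symm (hE k)).symm.trans (Measure.prod_apply (hE k))
  have hmeas : ∀ k, Measurable fun ω => Q.restrict (T k) {x | sgn (A ω x) ≠ boolLabel (σ k)} :=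
    fun k => measurable_measure_prodMk_left (hE k)
  simp only [hswap]
  rw [← lintegral_finsetSum _ fun k _ => hmeas k,
    ← lintegral_const_mul _ (Finset.measurable_sum _ fun k _ => hmeas k)]
  exact lintegral_mono fun ω =>
    h.mul_sum_measure_le_setLIntegral σ (hA.comp measurable_prodMk_left)

theorem lintegral_sub_sq_le (h : IsHypercube η T S τ) {σ σ' : ι → Bool} {k : ι}
    (hσ : ∀ k' ≠ k, σ k' = σ' k') :
    ∫⁻ x, ENNReal.ofReal (2 * (η σ x - η σ' x) ^ 2) ∂Q ≤ ENNReal.ofReal (8 * τ ^ 2) * Q (S k) := by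
  rw [← lintegral_indicator_const (h.measurableSet_cell k)]
  refine lintegral_mono fun x => ?_
  by_cases hx : x ∈ S k
  · have hsq : (η σ x - η σ' x) ^ 2 ≤ (2 * τ) ^ 2 :=
      sq_le_sq' (by linarith [(h.mem_Icc σ x).1, (h.mem_Icc σ' x).2])
        (by linarith [(h.mem_Icc σ x).2, (h.mem_Icc σ' x).1])
    rw [indicator_of_mem hx]
    exact ENNReal.ofReal_le_ofReal (by linarith)
  · simp [h.eq_off_cell σ σ' k hσ x hx]

theorem quarter_le_iid_add_iid [IsProbabilityMeasure Q] (h : IsHypercube η T S τ) {n : ℕ} {k : ι}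
    (hk : n * (ENNReal.ofReal (8 * τ ^ 2) * Q (S k)) ≤ 1 / 4) {σ σ' : ι → Bool}
    (hσ : ∀ k' ≠ k, σ k' = σ' k') {E : Set (Fin n → (Fin d → ℝ) × ℝ)} (hE : MeasurableSet E) :
    1 / 4 ≤ iid (jointMeasure (η σ) Q) n E + iid (jointMeasure (η σ') Q) n Eᶜ := by
  have htest := one_half_le_iid_add_iid (Q := Q) (h.measurable σ) (h.measurable σ')
    (h.mem_Icc_quarter σ) (h.mem_Icc_quarter σ') hE
  have hsplit : (1 / 2 : ℝ≥0∞) = 1 / 4 + 1 / 4 := by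
    rw [ENNReal.div_add_div_same, one_add_one_eq_two,
      (ENNReal.div_eq_div_iff (by norm_num) (by norm_num) (by norm_num) (by norm_num)).2
        (by norm_num : (4 : ℝ≥0∞) * 1 = 2 * 2)]
  rw [hsplit] at htest
  exact (ENNReal.add_le_add_iff_right (by simp)).1 <| htest.trans <|
    add_le_add_right ((mul_le_mul_right (h.lintegral_sub_sq_le hσ) _).trans hk) _

theorem quarter_mul_le [DecidableEq ι] [IsProbabilityMeasure Q] (h : IsHypercube η T S τ) {n : ℕ}
    {A : (Fin n → (Fin d → ℝ) × ℝ) → (Fin d → ℝ) → ℝ} (hA : Measurable (Function.uncurry A))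
    {k : ι} (hk : n * (ENNReal.ofReal (8 * τ ^ 2) * Q (S k)) ≤ 1 / 4) (σ : ι → Bool) :
    1 / 4 * Q (T k) ≤
      ∫⁻ x in T k, iid (jointMeasure (η σ) Q) n {ω | sgn (A ω x) ≠ boolLabel (σ k)} ∂Q +
      ∫⁻ x in T k, iid (jointMeasure (η (Function.update σ k (!σ k))) Q) n
        {ω | sgn (A ω x) ≠ boolLabel (Function.update σ k (!σ k) k)} ∂Q := by
  have hP := isProbabilityMeasure_jointMeasure (Q := Q) (h.measurable σ) (h.mem_Icc_zero_one σ)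
  have hE : MeasurableSet {p : (Fin n → (Fin d → ℝ) × ℝ) × (Fin d → ℝ) |
      sgn (A p.1 p.2) ≠ boolLabel (σ k)} :=
    (measurableSet_eq_fun (measurable_sgn.comp hA) measurable_const).compl
  have hmeas : Measurable fun x =>
      iid (jointMeasure (η σ) Q) n {ω | sgn (A ω x) ≠ boolLabel (σ k)} :=
    measurable_measure_prodMk_right hE
  rw [← setLIntegral_const, ← lintegral_add_left hmeas]
  refine lintegral_mono fun x => ?_
  simp only [Function.update_self, sgn_ne_boolLabel_not_iff]
  exact h.quarter_le_iid_add_iid hk (fun k' hk' => (Function.update_of_ne hk' _ _).symm)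
    (measurable_prodMk_right hE)

theorem exists_le_expectedExcess01 [Fintype ι] [IsProbabilityMeasure Q] (h : IsHypercube η T S τ)
    {n : ℕ} {A : Estimator d n} (hA : A.Meas)
    (hS : ∀ k, n * (ENNReal.ofReal (8 * τ ^ 2) * Q (S k)) ≤ 1 / 4) :
    ∃ σ, τ / 4 * ∑ k, Q.real (T k) ≤ expectedExcess01 (jointMeasure (η σ) Q) A := by
  classical
  obtain ⟨σ, hσ⟩ := exists_sum_le_two_mul_sum fun k σ =>
    h.quarter_mul_le hA.measurable_uncurry (hS k) σ
  have hP := isProbabilityMeasure_jointMeasure (Q := Q) (h.measurable σ) (h.mem_Icc_zero_one σ)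
  have hle := h.mul_sum_setLIntegral_le (Q := Q) (iid (jointMeasure (η σ) Q) n)
    hA.measurable_uncurry σ
  refine ⟨σ, ?_⟩
  rw [expectedExcess01_jointMeasure (h.measurable σ) (h.mem_Icc_zero_one σ) hA]
  have hfin := (lintegral_setLIntegral_abs_le_one (Q := Q) (h.measurable σ) (h.mem_Icc_zero_one σ)
    A).trans_lt one_lt_top
  rw [← ENNReal.ofReal_le_iff_le_toReal hfin.ne]
  refine le_trans ?_ hle
  calc ENNReal.ofReal (τ / 4 * ∑ k, Q.real (T k))
      = ENNReal.ofReal τ * ∑ k, 1 / 4 * Q (T k) := by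
        rw [div_eq_mul_one_div, mul_assoc, ENNReal.ofReal_mul h.pos.le, Finset.mul_sum,
          ENNReal.ofReal_sum_of_nonneg fun k _ => by positivity]
        simp [ENNReal.ofReal_mul, ENNReal.ofReal_inv_of_pos]
    _ ≤ ENNReal.ofReal τ * (2 * _) := mul_le_mul_right hσ _
    _ = ENNReal.ofReal (2 * τ) * _ := by
        rw [ENNReal.ofReal_mul zero_le_two, ENNReal.ofReal_ofNat]
        ring

end IsHypercube

end Assouad

/-! ## The uniform distribution on the cube -/

section UniformCube

theorem measurePreserving_pi_comp {ι κ : Type*} [Fintype ι] [Fintype κ] {α : ι → Type*}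
    [∀ i, MeasurableSpace (α i)] (μ : ∀ i, Measure (α i)) [∀ i, IsProbabilityMeasure (μ i)]
    {g : κ → ι} (hg : g.Injective) :
    MeasurePreserving (fun (x : ∀ i, α i) j => x (g j)) (Measure.pi μ)
      (Measure.pi fun j => μ (g j)) := by
  have hind := (ProbabilityTheory.iIndepFun_pi (μ := μ) (X := fun _ => id)
    fun _ => aemeasurable_id).precomp hg
  refine ⟨measurable_pi_lambda _ fun j => measurable_pi_apply (g j), ?_⟩
  have hmap := (ProbabilityTheory.iIndepFun_iff_map_fun_eq_pi_map
    fun j => (measurable_pi_apply (g j)).aemeasurable).1 hind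
  simpa only [id, Function.comp_def, (measurePreserving_eval μ _).map_eq] using hmap

/-- The uniform distribution on the unit cube. -/
def uniformCube (d : ℕ) : Measure (Fin d → ℝ) := volume.restrict (cube d)

theorem uniformCube_eq_pi (d : ℕ) :
    uniformCube d = Measure.pi fun _ => volume.restrict (Icc 0 1) := by
  rw [uniformCube, cube, volume_pi, Measure.restrict_pi_pi]

instance isProbabilityMeasure_restrict_Icc_zero_one :
    IsProbabilityMeasure (volume.restrict (Icc (0 : ℝ) 1)) := ⟨by simp⟩

instance isProbabilityMeasure_uniformCube (d : ℕ) : IsProbabilityMeasure (uniformCube d) := by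
  rw [uniformCube_eq_pi]
  infer_instance

theorem uniformCube_cube (d : ℕ) : uniformCube d (cube d) = 1 := by
  rw [uniformCube, Measure.restrict_apply_self, ← Measure.restrict_apply_univ, ← uniformCube,
    measure_univ]

theorem uniformCube_mem_MLam (d : ℕ) {Λ : ℝ} (hΛ : 1 ≤ Λ) : uniformCube d ∈ MLam d Λ := by
  refine ⟨fun _ => 1, measurable_const, fun _ => ⟨zero_le_one, hΛ⟩, ?_⟩
  simp only [ENNReal.ofReal_one]
  exact withDensity_one.symm

theorem measurePreserving_comp_castLE {d dstar : ℕ} (hd : dstar ≤ d) :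
    MeasurePreserving (fun x : Fin d → ℝ => x ∘ Fin.castLE hd) (uniformCube d)
      (uniformCube dstar) := by
  rw [uniformCube_eq_pi, uniformCube_eq_pi]
  exact measurePreserving_pi_comp _ (Fin.castLE_injective hd)

theorem measurableSet_gridBall {m N : ℕ} (ρ : ℝ) (k : Fin m → Fin N) :
    MeasurableSet (gridBall ρ k) :=
  Metric.isClosed_closedBall.measurableSet

theorem uniformCube_gridBall {m N : ℕ} (hN : 0 < N) {ρ : ℝ} (hρ0 : 0 ≤ ρ) (hρ : ρ ≤ 1 / 2)
    (k : Fin m → Fin N) : uniformCube m (gridBall ρ k) = ENNReal.ofReal ((2 * ρ / N) ^ m) := by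
  rw [uniformCube, Measure.restrict_apply (measurableSet_gridBall ρ k),
    inter_eq_left.2 (gridBall_subset_cube hN hρ k), gridBall,
    Real.volume_pi_closedBall _ (by positivity), Fintype.card_fin, mul_div_assoc]

theorem uniformCube_preimage_gridBall {d dstar N : ℕ} (hd : dstar ≤ d) (hN : 0 < N) {ρ : ℝ}
    (hρ0 : 0 ≤ ρ) (hρ : ρ ≤ 1 / 2) (k : Fin dstar → Fin N) :
    uniformCube d ((· ∘ Fin.castLE hd) ⁻¹' gridBall ρ k) =
      ENNReal.ofReal ((2 * ρ / N) ^ dstar) := by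
  rw [(measurePreserving_comp_castLE hd).measure_preimage
    (measurableSet_gridBall ρ k).nullMeasurableSet, uniformCube_gridBall hN hρ0 hρ]

end UniformCube

/-! ## The hypercube of bumps -/

section BumpHypercube

/-- The data distribution at the vertex `σ` of a hypercube of conditional class probabilities,
with uniform input marginal. -/
def IsHypercube.dataDist {d : ℕ} {ι : Type*} {η : (ι → Bool) → (Fin d → ℝ) → ℝ}
    {T S : ι → Set (Fin d → ℝ)} {τ : ℝ} (h : IsHypercube η T S τ) (σ : ι → Bool) : DataDist d where
  η := η σ
  Q := uniformCube d
  η_meas := h.measurable σ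
  η_mem := h.mem_Icc_zero_one σ
  Q_prob := inferInstance
  Q_cube := uniformCube_cube d

theorem IsHypercube.dataDist_mem_HCHL {d q K dstar : ℕ} {β r Λ : ℝ} (hΛ : 1 ≤ Λ) {ι : Type*}
    {η : (ι → Bool) → (Fin d → ℝ) → ℝ} {T S : ι → Set (Fin d → ℝ)} {τ : ℝ}
    (h : IsHypercube η T S τ) {σ : ι → Bool} (hσ : η σ ∈ GCH K dstar β r q d) :
    h.dataDist σ ∈ HCHL d q K dstar β r Λ :=
  ⟨⟨η σ, hσ, fun x _ => h.mem_Icc_zero_one σ x, ae_of_all _ fun _ => rfl⟩,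
    uniformCube_mem_MLam d hΛ⟩

variable {d dstar N : ℕ} (hd : dstar ≤ d) {Φ : ℝ → ℝ} {δ : ℝ}

theorem isHypercube_bumpEta (hN : 0 < N) (hΦ : Measurable Φ) (hmono : MonotoneOn Φ (Ici 0))
    (hΦ0 : Φ 0 = 0) (hδ : 0 ≤ δ) (hpos : 0 < Φ δ) (hle : Φ δ ≤ 1 / 2) :
    IsHypercube (bumpEta (N := N) hd Φ δ)
      (fun k => (· ∘ Fin.castLE hd) ⁻¹' gridBall (1 / 6) k)
      (fun k => (· ∘ Fin.castLE hd) ⁻¹' gridBall (1 / 3) k) (Φ δ / 2) where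
  pos := by linarith
  le_quarter := by linarith
  measurable := measurable_bumpEta hd hΦ
  mem_Icc := bumpEta_mem_Icc hd hN hmono hΦ0 hδ
  measurableSet_core k :=
    (measurableSet_gridBall _ k).preimage (measurePreserving_comp_castLE hd).measurable
  measurableSet_cell k :=
    (measurableSet_gridBall _ k).preimage (measurePreserving_comp_castLE hd).measurable
  disjoint_core _ _ hk := (disjoint_gridBall hN (by norm_num) hk).preimage _
  apply_core σ k x hx := by
    rw [bumpEta_of_mem_gridBall hd hN hΦ0 σ hx]
    cases σ k <;> simp [boolLabel, sub_eq_add_neg]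
  eq_off_cell _ _ _ hσ _ hx := bumpEta_congr hd hN hσ hx

theorem sum_uniformCube_preimage_gridBall (hN : 0 < N) {ρ : ℝ} (hρ0 : 0 ≤ ρ) (hρ : ρ ≤ 1 / 2) :
    ∑ k : Fin dstar → Fin N, (uniformCube d).real ((· ∘ Fin.castLE hd) ⁻¹' gridBall ρ k) =
      (2 * ρ) ^ dstar := by
  have hN0 : (N : ℝ) ≠ 0 := Nat.cast_ne_zero.2 hN.ne'
  simp only [measureReal_def, uniformCube_preimage_gridBall hd hN hρ0 hρ]
  rw [ENNReal.toReal_ofReal (by positivity), Finset.sum_const, Finset.card_univ, Fintype.card_fun,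
    Fintype.card_fin, Fintype.card_fin, nsmul_eq_mul, Nat.cast_pow, ← mul_pow,
    mul_div_cancel₀ _ hN0]

theorem exists_le_expectedExcess01_bumpEta (hN : 0 < N)
    (h : IsHypercube (bumpEta (N := N) hd Φ δ)
      (fun k => (· ∘ Fin.castLE hd) ⁻¹' gridBall (1 / 6) k)
      (fun k => (· ∘ Fin.castLE hd) ⁻¹' gridBall (1 / 3) k) (Φ δ / 2)) {n : ℕ}
    (hn : n * (2 * Φ δ ^ 2 * (1 / N) ^ dstar) ≤ 1 / 4) {A : Estimator d n} (hA : A.Meas) :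
    ∃ σ, Φ δ / 8 * (1 / 3) ^ dstar ≤ expectedExcess01 (h.dataDist σ).P A := by
  have hcell : ∀ k : Fin dstar → Fin N, n * (ENNReal.ofReal (8 * (Φ δ / 2) ^ 2) *
      uniformCube d ((· ∘ Fin.castLE hd) ⁻¹' gridBall (1 / 3) k)) ≤ 1 / 4 := fun k => by
    rw [uniformCube_preimage_gridBall hd hN (by norm_num) (by norm_num),
      ← ENNReal.ofReal_mul (by positivity), ← ENNReal.ofReal_natCast,
      ← ENNReal.ofReal_mul n.cast_nonneg]
    calc ENNReal.ofReal (n * (8 * (Φ δ / 2) ^ 2 * (2 * (1 / 3) / N) ^ dstar))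
        ≤ ENNReal.ofReal (n * (2 * Φ δ ^ 2 * (1 / N) ^ dstar)) := by
          rw [show 8 * (Φ δ / 2) ^ 2 = 2 * Φ δ ^ 2 by ring]
          gcongr
          norm_num
      _ ≤ ENNReal.ofReal (1 / 4) := ENNReal.ofReal_le_ofReal hn
      _ = 1 / 4 := by simp [ENNReal.ofReal_inv_of_pos]
  obtain ⟨σ, hσ⟩ := h.exists_le_expectedExcess01 hA hcell
  rw [sum_uniformCube_preimage_gridBall hd hN (by norm_num) (by norm_num)] at hσ
  exact ⟨σ, le_of_eq_of_le (by norm_num; ring) hσ⟩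

end BumpHypercube

/-! ## The minimax rate -/

section MinimaxRate

theorem exists_grid_size {a e : ℝ} (ha : 0 < a) (he : 0 ≤ e) {n : ℕ} (hn : 0 < n) :
    ∃ N : ℕ, 0 < N ∧ (n : ℝ) * (N : ℝ) ^ (-a) ≤ 1 ∧
      2 ^ (-e) * (1 / n : ℝ) ^ (e / a) ≤ (N : ℝ) ^ (-e) := by
  have hn0 : (0 : ℝ) < n := Nat.cast_pos.2 hn
  have hroot : (1 : ℝ) ≤ (n : ℝ) ^ (1 / a) :=
    Real.one_le_rpow (by exact_mod_cast hn) (by positivity)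
  have hN : 0 < ⌈(n : ℝ) ^ (1 / a)⌉₊ := Nat.ceil_pos.2 (by linarith)
  have hN0 : (0 : ℝ) < ⌈(n : ℝ) ^ (1 / a)⌉₊ := Nat.cast_pos.2 hN
  refine ⟨_, hN, ?_, ?_⟩
  · rw [Real.rpow_neg hN0.le, ← div_eq_mul_inv, div_le_one (by positivity)]
    calc (n : ℝ) = ((n : ℝ) ^ (1 / a)) ^ a := by
          rw [← Real.rpow_mul hn0.le, one_div_mul_cancel ha.ne', Real.rpow_one]
      _ ≤ _ := Real.rpow_le_rpow (by positivity) (Nat.le_ceil _) ha.le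
  · calc 2 ^ (-e) * (1 / n : ℝ) ^ (e / a) = (2 * (n : ℝ) ^ (1 / a)) ^ (-e) := by
          rw [Real.mul_rpow (by norm_num) (by positivity), ← Real.rpow_mul hn0.le, one_div,
            Real.inv_rpow hn0.le, ← Real.rpow_neg hn0.le]
          congr 2
          ring
      _ ≤ _ := Real.rpow_le_rpow_of_nonpos hN0
          ((Nat.ceil_lt_add_one (by linarith)).le.trans (by linarith)) (by linarith)

theorem rpow_neg_sq_mul_one_div_pow {x : ℝ} (hx : 0 < x) (e : ℝ) (m : ℕ) :
    (x ^ (-e)) ^ 2 * (1 / x) ^ m = x ^ (-(m + 2 * e)) := by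
  rw [one_div, inv_pow, ← Real.rpow_natCast, ← Real.rpow_natCast, ← Real.rpow_neg hx.le,
    ← Real.rpow_mul hx.le, ← Real.rpow_add hx]
  congr 1
  push_cast
  ring

theorem mul_two_mul_sq_mul_le {C e x : ℝ} (hC : C ∈ Icc (0 : ℝ) (1 / 4)) (hx : 0 < x) {n m : ℕ}
    (hn : n * x ^ (-(m + 2 * e)) ≤ 1) :
    n * (2 * (C * x ^ (-e)) ^ 2 * (1 / x) ^ m) ≤ 1 / 4 := by
  calc n * (2 * (C * x ^ (-e)) ^ 2 * (1 / x) ^ m)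
      = 2 * C ^ 2 * (n * x ^ (-(m + 2 * e))) := by
        rw [← rpow_neg_sq_mul_one_div_pow hx]
        ring
    _ ≤ 2 * C ^ 2 * 1 := by gcongr
    _ ≤ 1 / 4 := by nlinarith [hC.1, hC.2]

theorem exists_mem_HCHL_le_expectedExcess01 {d dstar q K n : ℕ} (hd : dstar ≤ d) {β r Λ C e : ℝ}
    {Φ : ℝ → ℝ} {δ : ℕ → ℝ} (hΦ : Measurable Φ) (hmono : MonotoneOn Φ (Ici 0)) (hΦ0 : Φ 0 = 0)
    (hδ : ∀ N, 0 ≤ δ N) (hC0 : 0 < C) (hC : C ≤ 1 / 4) (he : 0 < e)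
    (hgap : ∀ N : ℕ, Φ (δ N) = C * (N : ℝ) ^ (-e))
    (hmem : ∀ N, 0 < N → ∀ σ : (Fin dstar → Fin N) → Bool,
      bumpEta hd Φ (δ N) σ ∈ GCH K dstar β r q d)
    (hΛ : 1 ≤ Λ) (hn : 0 < n) {A : Estimator d n} (hA : A.Meas) :
    ∃ D ∈ HCHL d q K dstar β r Λ, C * 2 ^ (-e) / 8 * (1 / 3) ^ dstar *
      (1 / n : ℝ) ^ (e / (dstar + 2 * e)) ≤ expectedExcess01 D.P A := by
  obtain ⟨N, hN, hnN, hNe⟩ := exists_grid_size (a := dstar + 2 * e) (by positivity) he.le hn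
  have hN0 : (0 : ℝ) < N := Nat.cast_pos.2 hN
  have hNe1 : (N : ℝ) ^ (-e) ≤ 1 :=
    Real.rpow_le_one_of_one_le_of_nonpos (by exact_mod_cast hN) (by linarith)
  have hpos : 0 < Φ (δ N) := by rw [hgap]; positivity
  have hle : Φ (δ N) ≤ 1 / 2 := by
    rw [hgap]
    exact (mul_le_of_le_one_right hC0.le hNe1).trans (hC.trans (by norm_num))
  have hcube := isHypercube_bumpEta hd hN hΦ hmono hΦ0 (hδ N) hpos hle
  have hsample : n * (2 * Φ (δ N) ^ 2 * (1 / N) ^ dstar) ≤ 1 / 4 := by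
    rw [hgap]
    exact mul_two_mul_sq_mul_le ⟨hC0.le, hC⟩ hN0 hnN
  obtain ⟨σ, hσ⟩ := exists_le_expectedExcess01_bumpEta hd hN hcube hsample hA
  refine ⟨_, hcube.dataDist_mem_HCHL hΛ (hmem N hN σ), le_trans ?_ hσ⟩
  calc C * 2 ^ (-e) / 8 * (1 / 3) ^ dstar * (1 / n : ℝ) ^ (e / (dstar + 2 * e))
      = C * (2 ^ (-e) * (1 / n : ℝ) ^ (e / (dstar + 2 * e))) / 8 * (1 / 3) ^ dstar := by ring
    _ ≤ C * (N : ℝ) ^ (-e) / 8 * (1 / 3) ^ dstar := by gcongr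
    _ = Φ (δ N) / 8 * (1 / 3) ^ dstar := by rw [hgap]

theorem exists_pos_forall_exists_mem_HCHL_mul_rpow_le {dstar : ℕ} (hdstar : 0 < dstar) {β : ℝ}
    (hβ : 0 < β) (q : ℕ) {r : ℝ} (hr : 1 / 2 < r) {e : ℝ} (he : e = β * min 1 β ^ q) :
    ∃ c > 0, ∀ {d K n : ℕ} {Λ : ℝ} {A : Estimator d n}, 1 ≤ Λ → dstar * q ≤ K * q →
      dstar ≤ d → 0 < n → A.Meas → ∃ D ∈ HCHL d q K dstar β r Λ,
        c * (1 / n : ℝ) ^ (e / (dstar + 2 * e)) ≤ expectedExcess01 D.P A := by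
  obtain ⟨b, ⟨hb0, hb⟩, c, ⟨hc0, hc⟩, hmem⟩ := exists_bumpEta_mem_GCH hdstar hβ hr
  have hγ : 0 < min 1 β := by positivity
  have he0 : 0 < e := by rw [he]; positivity
  have hC0 : 0 < (powMap c (min 1 β))^[q] b := powMap_iterate_pos hc0 _ q hb0
  have hC : (powMap c (min 1 β))^[q] b ≤ 1 / 4 :=
    ((mapsTo_powMap_Icc hc0.le hγ.le hc (by norm_num)).iterate q ⟨hb0.le, hb⟩).2
  have hgap : ∀ N : ℕ, (powMap c (min 1 β))^[q] (b * (N : ℝ) ^ (-β)) =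
      (powMap c (min 1 β))^[q] b * (N : ℝ) ^ (-e) := fun N => by
    rw [powMap_iterate_mul hc0.le q hb0.le (by positivity), ← Real.rpow_mul N.cast_nonneg,
      neg_mul, he]
  exact ⟨(powMap c (min 1 β))^[q] b * 2 ^ (-e) / 8 * (1 / 3) ^ dstar, by positivity,
    fun {d K n Λ A} hΛ hK hd hn hA => exists_mem_HCHL_le_expectedExcess01 hd
      ((measurable_powMap c _).iterate q) (monotoneOn_powMap_iterate hc0.le hγ.le q)
      (Function.iterate_fixed (powMap_zero c hγ.ne') q) (fun N => by positivity) hC0 hC he0 hgap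
      (fun N => hmem d K N q hd hK) hΛ hn hA⟩

theorem bddAbove_expectedExcess01 {d n : ℕ} {A : Estimator d n} (hA : A.Meas)
    (H : Set (DataDist d)) : BddAbove (range fun D : H => expectedExcess01 D.1.P A) := by
  refine ⟨1, forall_mem_range.2 fun D => ?_⟩
  have := D.1.Q_prob
  exact expectedExcess01_jointMeasure_le_one D.1.η_meas D.1.η_mem hA

instance nonempty_meas_estimator (d n : ℕ) : Nonempty {A : Estimator d n // A.Meas} :=
  ⟨⟨fun _ _ => 0, measurable_const⟩⟩

end MinimaxRate

/-- Theorem 4.2 : minimax lower bound without a noise condition. -/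
theorem statement_6
    (dstar : ℕ) (hdstar : 0 < dstar) (β : ℝ) (hβ : 0 < β) (q : ℕ)
    (r : ℝ) (hr : 1 / 2 < r) :
    ∃ c10 : ℝ, 0 < c10 ∧
      ∀ (d K : ℕ), 0 < d → 0 < K → ∀ (Λ : ℝ), 1 ≤ Λ →
        dstar * q ≤ K * q → dstar ≤ d → ∀ (n : ℕ), 0 < n →
        (⨅ A : {A : Estimator d n // A.Meas},
            ⨆ D : ↥(HCHL d q K dstar β r Λ), expectedExcess01 D.1.P A.1) ≥
          c10 * (1 / n : ℝ) ^
            ((β * min 1 β ^ q) / ((dstar : ℝ) + 2 * (β * min 1 β ^ q))) := by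
  obtain ⟨c, hc, hlower⟩ := exists_pos_forall_exists_mem_HCHL_mul_rpow_le hdstar hβ q hr rfl
  refine ⟨c, hc, fun d K _ _ Λ hΛ hK hd n hn => le_ciInf fun ⟨A, hA⟩ => ?_⟩
  obtain ⟨D, hD, hle⟩ := hlower hΛ hK hd hn hA
  exact le_ciSup_of_le (bddAbove_expectedExcess01 hA _) ⟨D, hD⟩ hle

end ZZS
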